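/- arXiv:math/0210214 — 4 statements merged into one kernel-verified Lean document; each statement's English description precedes it below -/
import Mathlib

section
/- Let L be a CW complex of finite type with finite fundamental group, and let K = L ∨ S² be the wedge of L with the 2-sphere. Then every separable metrizable space X with K ∈ AE(X) admits a metrizable compactification X̃ with K ∈ AE(X̃). (In particular, Conjecture B of Dydak fails for any such L that is not homotopy dominated by a finite CW complex.) -/
/-!
The idea is to find a filtration of `K` by compact sets that are absolute extensors of `X`, and a
compactification of `X` that keeps all of them.

The wedge `K` retracts onto `S²`, so `S² ∈ AE(X)`, and hence `S^d ∈ AE(X)` for all `d ≥ 2`. This is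
used in the form that nowhere vanishing maps to `ℝ^(d+1)` extend from closed subsets of `X`
(`NonvanishingExtension`, `NonvanishingExtension.succ`).

By finiteness of type, `K` is exhausted by compact subcomplexes `M n`, which contain the sphere and
a skeleton of `L` of dimension at least two; each arises from the preceding one by attaching finitely
many cells of dimension at least three (`exists_filtration`). Maps from `X` can be pushed off such
cells, because the boundary spheres are absolute extensors of `X` (`pushable_of_attachesCell`).
Therefore an extension with values in `K` can be deformed, over larger and larger closed pieces of
`X`, to one with values in `M n`; so `M n ∈ AE(X)` (`isAESet_of_pushable`).

Each `M n` is a compact neighbourhood retract of a finite-dimensional space, since this property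
survives the attachment of a cell (`IsEuclideanRetract.attachesCell`). Up to small perturbations
there are thus only countably many extension problems for maps into the `M n`, and `X` can be
embedded in a countable power of the Hilbert cube in such a way that solutions of all of them occur
among the coordinates (`exists_embedding_recording`). The closure of `X` in this embedding is a
compactification `X'` with `M n ∈ AE(X')` for all `n` (`isAESet_closure_range`,
`exists_compactification`). Finally, a map to `K` from a closed subset of `X'` has compact image,
which lies in some `M n` (`exists_subset_skel`), so `K ∈ AE(X')`.
-/

open Metric Topology TopologicalSpace

universe u v w

/-- `K ∈ AE(X)`: every continuous map from a closed subset of `X` to `K` extends to `X`. -/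
def IsAE (K : Type u) [TopologicalSpace K] (X : Type v) [TopologicalSpace X] : Prop :=
  ∀ A : Set X, IsClosed A → ∀ f : C(A, K), ∃ F : C(X, K), ∀ a : A, F a = f a

/-- `K` is homotopy dominated by `F`. -/
def HomotopyDominatedBy (K : Type u) [TopologicalSpace K] (F : Type v) [TopologicalSpace F] :
    Prop :=
  ∃ (i : C(K, F)) (d : C(F, K)), (d.comp i).Homotopic (ContinuousMap.id K)

/-- The `n`-sphere, as the unit sphere of `ℝ^(n+1)`. -/
abbrev Sphere (n : ℕ) : Type := Metric.sphere (0 : EuclideanSpace ℝ (Fin (n + 1))) 1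

/-- The closed `n`-disk. -/
abbrev Disk (n : ℕ) : Type := Metric.closedBall (0 : EuclideanSpace ℝ (Fin n)) 1

/-- A CW structure on a (Hausdorff) topological space `X`: a family of cells with
characteristic maps satisfying the usual axioms (embedding on interiors, the open cells
partition `X`, closure finiteness, weak topology). -/
structure CWStructure (X : Type u) [TopologicalSpace X] where
  cell : ℕ → Type v
  attach : ∀ n, cell n → C(Disk n, X)
  isEmbedding_interior : ∀ n (i : cell n),
    Topology.IsEmbedding
      fun y : {y : Disk n // ‖(y : EuclideanSpace ℝ (Fin n))‖ < 1} => attach n i y.1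
  pairwiseDisjoint : ∀ n (i : cell n), ∀ m (j : cell m),
    (⟨n, i⟩ : Σ k, cell k) ≠ ⟨m, j⟩ →
      Disjoint (attach n i '' {y : Disk n | ‖(y : EuclideanSpace ℝ (Fin n))‖ < 1})
        (attach m j '' {y : Disk m | ‖(y : EuclideanSpace ℝ (Fin m))‖ < 1})
  covers : ∀ x : X, ∃ n, ∃ i : cell n, ∃ y : Disk n,
    ‖(y : EuclideanSpace ℝ (Fin n))‖ < 1 ∧ attach n i y = x
  closureFiniteness : ∀ n (i : cell n), ∃ S : Finset (Σ k, cell k),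
    (∀ j ∈ S, j.1 < n) ∧
      attach n i '' {y : Disk n | ‖(y : EuclideanSpace ℝ (Fin n))‖ = 1} ⊆
        ⋃ j ∈ S, attach j.1 j.2 '' {y : Disk j.1 | ‖(y : EuclideanSpace ℝ (Fin j.1))‖ < 1}
  weakTopology : ∀ A : Set X, (∀ n (i : cell n), IsClosed (attach n i ⁻¹' A)) → IsClosed A

/-- `K` is homotopy dominated by some finite CW complex. -/
def DominatedByFiniteCW (K : Type u) [TopologicalSpace K] : Prop :=
  ∃ (F : Type) (_ : TopologicalSpace F) (_ : T2Space F) (cF : CWStructure.{0, 0} F),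
    Finite (Σ n, cF.cell n) ∧ HomotopyDominatedBy K F

/-- `K` is a wedge `L ∨ S`: `K` is the union of two closed subspaces, one homeomorphic
to `L`, the other to `S`, meeting in exactly one point. -/
def IsWedgeOf (K : Type u) [TopologicalSpace K] (L : Type v) [TopologicalSpace L]
    (S : Type w) [TopologicalSpace S] : Prop :=
  ∃ L' S' : Set K, IsClosed L' ∧ IsClosed S' ∧ L' ∪ S' = Set.univ ∧
    (∃ p : K, L' ∩ S' = {p}) ∧ Nonempty (L' ≃ₜ L) ∧ Nonempty (S' ≃ₜ S)

/-- The Hilbert cube `Q = [0,1]^ℕ`. -/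
abbrev HilbertCube : Type := ℕ → unitInterval

/-- A continuous map `f : Y → Z` is `L`-invertible if every continuous map `g : Z' → Z`
from a compact metrizable space `Z'` with `L ∈ AE(Z')` lifts through `f`. -/
def IsInvertibleFor (L : Type u) [TopologicalSpace L] {Y : Type v} {Z : Type w}
    [TopologicalSpace Y] [TopologicalSpace Z] (f : C(Y, Z)) : Prop :=
  ∀ (Z' : Type) [TopologicalSpace Z'] [CompactSpace Z'] [MetrizableSpace Z'],
    IsAE L Z' → ∀ g : C(Z', Z), ∃ h : C(Z', Y), ∀ z, f (h z) = g z

/-- A cozero (functionally open) subset of `B`. -/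
def IsCozero {B : Type u} [TopologicalSpace B] (G : Set B) : Prop :=
  ∃ f : C(B, ℝ), G = f ⁻¹' {0}ᶜ

/-- A topological space is completely metrizable if its topology is induced by a
complete metric. -/
def IsCompletelyMetrizable (X : Type u) [t : TopologicalSpace X] : Prop :=
  ∃ m : MetricSpace X, m.toUniformSpace.toTopologicalSpace = t ∧
    @CompleteSpace X m.toUniformSpace

namespace WedgeCompactification

open Set

/-! ### General facts on continuity and extension -/

/-- A compact image in a Hausdorff space carries the quotient topology. -/
theorem continuousOn_image_of_isCompact {V K Z : Type*} [TopologicalSpace V] [TopologicalSpace K]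
    [T2Space K] [TopologicalSpace Z] {φ : V → K} {S : Set V} (hS : IsCompact S)
    (hφ : ContinuousOn φ S) {g : K → Z} (hg : ContinuousOn (fun y => g (φ y)) S) :
    ContinuousOn g (φ '' S) := by
  rw [continuousOn_iff_isClosed]
  intro C hC
  have hS' : CompactSpace S := isCompact_iff_compactSpace.1 hS
  have h1 : IsClosed ((fun y : S => g (φ y)) ⁻¹' C) :=
    hC.preimage (continuousOn_iff_continuous_domRestrict.1 hg)
  have h2 : IsCompact ((fun y : S => φ y) '' ((fun y : S => g (φ y)) ⁻¹' C)) :=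
    h1.isCompact.image (continuousOn_iff_continuous_domRestrict.1 hφ)
  refine ⟨_, h2.isClosed, ?_⟩
  ext b
  constructor
  · rintro ⟨hb, y, hy, rfl⟩
    exact ⟨⟨⟨y, hy⟩, hb, rfl⟩, y, hy, rfl⟩
  · rintro ⟨⟨y, hy, rfl⟩, hb⟩
    exact ⟨hy, hb⟩

/-- Tietze's theorem for total functions that are continuous on a closed set. -/
theorem tietze {X E : Type} [TopologicalSpace X] [NormalSpace X] [TopologicalSpace E]
    [TietzeExtension.{0, 0} E] {A : Set X} (hA : IsClosed A) {f : X → E} (hf : ContinuousOn f A) :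
    ∃ F : X → E, Continuous F ∧ EqOn F f A := by
  obtain ⟨F, hF⟩ := ContinuousMap.exists_restrict_eq hA
    (⟨A.domRestrict f, continuousOn_iff_continuous_domRestrict.1 hf⟩ : C(A, E))
  refine ⟨F, F.continuous, fun x hx => ?_⟩
  exact congrArg (fun h : C(A, E) => h ⟨x, hx⟩) hF

theorem continuous_of_isClosed_cover {X K : Type*} [TopologicalSpace X] [TopologicalSpace K]
    {P R : Set X} (hP : IsClosed P) (hR : IsClosed R) (hPR : ∀ x, x ∈ P ∨ x ∈ R)
    {f : X → K} (hfP : ContinuousOn f P) (hfR : ContinuousOn f R) : Continuous f := by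
  rw [← continuousOn_univ]
  refine (hfP.union_of_isClosed hfR hP hR).mono fun x _ => hPR x

/-! ### Extending nowhere vanishing maps -/

/-- Nowhere vanishing maps into `ℝ^d` extend from closed subsets of `X` to nowhere vanishing maps.
This is a reformulation of `S^(d-1) ∈ AE(X)`. -/
def NonvanishingExtension (X : Type) [TopologicalSpace X] (d : ℕ) : Prop :=
  ∀ A : Set X, IsClosed A → ∀ f : X → Fin d → ℝ, ContinuousOn f A → (∀ x ∈ A, f x ≠ 0) →
    ∃ F : X → Fin d → ℝ, Continuous F ∧ (∀ x, F x ≠ 0) ∧ EqOn F f A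

/-- This is the implication `S^(d-1) ∈ AE(X) → S^d ∈ AE(X)`: extend the first coordinate
arbitrarily; on the zero set of this extension the remaining coordinates can be extended
without zeros. -/
theorem NonvanishingExtension.succ {X : Type} [TopologicalSpace X] [NormalSpace X] {d : ℕ}
    (h : NonvanishingExtension X d) : NonvanishingExtension X (d + 1) := by
  intro A hA f hf hf0
  obtain ⟨u, hu, huf⟩ := tietze hA (f := fun x => f x 0) (by fun_prop)
  have hZ : IsClosed {x | u x = 0} := isClosed_eq hu continuous_const
  have htail : ContinuousOn (fun x => Fin.tail (f x)) A := by
    unfold Fin.tail; fun_prop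
  obtain ⟨v, hv, hv0, hvf⟩ := h (A ∩ {x | u x = 0}) (hA.inter hZ) (fun x => Fin.tail (f x))
    (htail.mono inter_subset_left) (by
      rintro x ⟨hx, hx0⟩ ht
      refine hf0 x hx ?_
      have h0 : f x 0 = 0 := (huf hx).symm.trans hx0
      funext i
      refine Fin.cases h0 (fun j => ?_) i
      exact congrFun ht j)
  classical
  obtain ⟨w, hw, hwf⟩ := tietze (hA.union hZ)
    (f := fun x => if x ∈ A then Fin.tail (f x) else v x) (by
      refine ContinuousOn.union_of_isClosed ?_ ?_ hA hZ
      · exact htail.congr fun x hx => by simp [hx]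
      · refine hv.continuousOn.congr fun x hx => ?_
        by_cases hxA : x ∈ A
        · simp only [hxA, if_true]; exact (hvf ⟨hxA, hx⟩).symm
        · simp [hxA])
  refine ⟨fun x => Fin.cons (u x) (w x), ?_, ?_, ?_⟩
  · refine continuous_pi fun i => ?_
    refine Fin.cases ?_ (fun j => ?_) i
    · simpa using hu
    · simp only [Fin.cons_succ]; fun_prop
  · intro x hx
    have h0 : u x = 0 := by simpa using congrFun hx 0
    have h1 : w x = 0 := by
      funext j; simpa using congrFun hx j.succ
    have h2 : w x = v x := by
      have := hwf (Or.inr h0)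
      by_cases hxA : x ∈ A
      · rw [this]; simp only [hxA, if_true]; exact (hvf ⟨hxA, h0⟩).symm
      · rw [this]; simp [hxA]
    exact hv0 x (h2 ▸ h1)
  · intro x hx
    have h1 : w x = Fin.tail (f x) := by
      rw [hwf (Or.inl hx)]; simp [hx]
    simp only [h1, huf hx]
    exact Fin.cons_self_tail (f x)

theorem NonvanishingExtension.of_le {X : Type} [TopologicalSpace X] [NormalSpace X] {d e : ℕ}
    (h : NonvanishingExtension X d) (hde : d ≤ e) : NonvanishingExtension X e := by
  induction e, hde using Nat.le_induction with
  | base => exact h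
  | succ n _ ih => exact ih.succ

theorem NonvanishingExtension.euclidean {X : Type} [TopologicalSpace X] {d : ℕ}
    (h : NonvanishingExtension X d) {A : Set X} (hA : IsClosed A)
    {f : X → EuclideanSpace ℝ (Fin d)} (hf : ContinuousOn f A) (hf0 : ∀ x ∈ A, f x ≠ 0) :
    ∃ F : X → EuclideanSpace ℝ (Fin d), Continuous F ∧ (∀ x, F x ≠ 0) ∧ EqOn F f A := by
  obtain ⟨F, hF, hF0, hFf⟩ := h A hA (fun x => (f x).ofLp)
    ((PiLp.continuous_ofLp 2 _).comp_continuousOn hf) (fun x hx h0 => hf0 x hx (by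
      ext i; simpa using congrFun h0 i))
  refine ⟨fun x => WithLp.toLp 2 (F x), (PiLp.continuous_toLp 2 _).comp hF, fun x h0 => ?_, ?_⟩
  · exact hF0 x (by simpa using congrArg WithLp.ofLp h0)
  · intro x hx
    simp [hFf hx]

/-! ### Attaching a cell -/

/-- The self-map `y ↦ y / max (1 - t/2) ‖y‖` of a normed space. For `t = 0` it is the
radial retraction onto the closed unit ball; for `t = 1` it pushes the complement of the ball of
radius `1/2` to the unit sphere. -/
noncomputable def stretch {V : Type*} [NormedAddCommGroup V] [NormedSpace ℝ V] (t : ℝ) (y : V) :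
    V :=
  (max (1 - t / 2) ‖y‖)⁻¹ • y

theorem stretch_pos {V : Type*} [NormedAddCommGroup V] {t : ℝ} (ht : t ≤ 1) (y : V) :
    0 < max (1 - t / 2) ‖y‖ :=
  lt_max_of_lt_left (by linarith)

section stretch
variable {V : Type*} [NormedAddCommGroup V] [NormedSpace ℝ V]

theorem norm_stretch {t : ℝ} (ht : t ≤ 1) (y : V) :
    ‖stretch t y‖ = (max (1 - t / 2) ‖y‖)⁻¹ * ‖y‖ := by
  rw [stretch, norm_smul, norm_inv, Real.norm_of_nonneg (stretch_pos ht y).le]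

theorem norm_stretch_le {t : ℝ} (ht : t ≤ 1) (y : V) : ‖stretch t y‖ ≤ 1 := by
  rw [norm_stretch ht, inv_mul_le_one₀ (stretch_pos ht y)]
  exact le_max_right _ _

theorem norm_stretch_eq_one {y : V} (hy : 1 / 2 ≤ ‖y‖) : ‖stretch 1 y‖ = 1 := by
  rw [norm_stretch le_rfl, max_eq_right (by linarith), inv_mul_cancel₀ (by linarith)]

theorem continuousOn_stretch :
    ContinuousOn (fun p : V × ℝ => stretch p.2 p.1) (univ ×ˢ Iic 1) := by
  unfold stretch
  refine ContinuousOn.smul (ContinuousOn.inv₀ (by fun_prop) ?_) (by fun_prop)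
  rintro ⟨y, t⟩ ⟨-, ht⟩
  exact (stretch_pos ht y).ne'

theorem stretch_eq_stretch_zero {t : ℝ} (ht : 0 ≤ t) {y : V} (hy : 1 ≤ ‖y‖) :
    stretch t y = stretch 0 y := by
  rw [stretch, stretch, max_eq_right (by linarith), max_eq_right (by linarith)]

theorem stretch_zero_of_norm_le {y : V} (hy : ‖y‖ ≤ 1) : stretch 0 y = y := by
  rw [stretch, max_eq_left (by linarith)]; simp

end stretch

/-- `φ` is the characteristic map of a `d`-cell attached to `A` inside `K`. For convenience
`φ` is defined on all of `ℝ^d` and precomposed with the radial retraction to the closed unit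
ball. -/
structure IsCellMap {K : Type} [TopologicalSpace K] {d : ℕ} (A : Set K)
    (φ : EuclideanSpace ℝ (Fin d) → K) : Prop where
  continuous : Continuous φ
  mem : ∀ y, 1 ≤ ‖y‖ → φ y ∈ A
  notMem : ∀ y, ‖y‖ < 1 → φ y ∉ A
  injOn : InjOn φ (ball 0 1)
  stretch_zero : ∀ y, φ (stretch 0 y) = φ y

/-- `B` is obtained from `A` by attaching a `d`-cell (all inside `K`). -/
def AttachesCell {K : Type} [TopologicalSpace K] (d : ℕ) (A B : Set K) : Prop :=
  ∃ φ : EuclideanSpace ℝ (Fin d) → K, IsCellMap A φ ∧ B = A ∪ range φ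

section cell
variable {K : Type} [TopologicalSpace K] {d : ℕ} {A : Set K}
  {φ : EuclideanSpace ℝ (Fin d) → K}

theorem IsCellMap.range_eq (h : IsCellMap A φ) : range φ = φ '' closedBall 0 1 := by
  refine Subset.antisymm ?_ (image_subset_range _ _)
  rintro _ ⟨y, rfl⟩
  exact ⟨stretch 0 y, by simpa using norm_stretch_le (by norm_num) y, h.stretch_zero y⟩

theorem IsCellMap.isCompact_range (h : IsCellMap A φ) : IsCompact (range φ) := by
  rw [h.range_eq]; exact (isCompact_closedBall _ _).image h.continuous

theorem IsCellMap.apply_stretch_of_one_le (h : IsCellMap A φ) {t : ℝ} (ht : 0 ≤ t)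
    {y : EuclideanSpace ℝ (Fin d)} (hy : 1 ≤ ‖y‖) : φ (stretch t y) = φ y := by
  rw [stretch_eq_stretch_zero ht hy, h.stretch_zero]

open Classical in
/-- The deformation of `A ∪ range φ` induced by `stretch` on the cell and fixed on `A`. -/
noncomputable def cellDeform {K : Type} (A : Set K) (φ : EuclideanSpace ℝ (Fin d) → K)
    (b : K) (t : ℝ) : K :=
  if b ∈ A then b else φ (stretch t (Function.invFunOn φ (ball 0 1) b))

theorem cellDeform_of_mem {K : Type} {A : Set K} {φ : EuclideanSpace ℝ (Fin d) → K} {b : K}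
    (hb : b ∈ A) (t : ℝ) : cellDeform A φ b t = b := by
  simp [cellDeform, hb]

theorem IsCellMap.cellDeform_apply (h : IsCellMap A φ) {t : ℝ} (ht : 0 ≤ t)
    (y : EuclideanSpace ℝ (Fin d)) : cellDeform A φ (φ y) t = φ (stretch t y) := by
  rcases le_or_gt 1 ‖y‖ with hy | hy
  · rw [cellDeform_of_mem (h.mem y hy), h.apply_stretch_of_one_le ht hy]
  · have := h.injOn.leftInvOn_invFunOn (show y ∈ ball 0 1 by simpa using hy)
    rw [cellDeform, if_neg (h.notMem y hy), this]

theorem IsCellMap.cellDeform_zero (h : IsCellMap A φ) {b : K} (hb : b ∈ A ∪ range φ) :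
    cellDeform A φ b 0 = b := by
  rcases hb with hb | ⟨y, rfl⟩
  · exact cellDeform_of_mem hb 0
  · rw [h.cellDeform_apply le_rfl, h.stretch_zero]

theorem IsCellMap.cellDeform_mem (h : IsCellMap A φ) {b : K} (hb : b ∈ A ∪ range φ) {t : ℝ}
    (ht : 0 ≤ t) : cellDeform A φ b t ∈ A ∪ range φ := by
  rcases hb with hb | ⟨y, rfl⟩
  · rw [cellDeform_of_mem hb t]; exact Or.inl hb
  · rw [h.cellDeform_apply ht]; exact Or.inr ⟨_, rfl⟩

theorem IsCellMap.continuousOn_cellDeform [T2Space K] (h : IsCellMap A φ) (hA : IsClosed A) :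
    ContinuousOn (fun p : K × ℝ => cellDeform A φ p.1 p.2) ((A ∪ range φ) ×ˢ Icc 0 1) := by
  rw [union_prod]
  have h2 : IsCompact ((closedBall (0 : EuclideanSpace ℝ (Fin d)) 1) ×ˢ Icc (0 : ℝ) 1) :=
    (isCompact_closedBall _ _).prod isCompact_Icc
  have himg : range φ ×ˢ Icc (0 : ℝ) 1
      = (Prod.map φ id) '' ((closedBall (0 : EuclideanSpace ℝ (Fin d)) 1) ×ˢ Icc (0 : ℝ) 1) := by
    rw [prodMap_image_prod, ← h.range_eq, image_id]
  have hφ : Continuous (Prod.map φ (id : ℝ → ℝ)) := h.continuous.prodMap continuous_id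
  refine ContinuousOn.union_of_isClosed ?_ ?_ (hA.prod isClosed_Icc)
    (h.isCompact_range.isClosed.prod isClosed_Icc)
  · exact continuous_fst.continuousOn.congr fun p hp => cellDeform_of_mem hp.1 p.2
  · rw [himg]
    refine continuousOn_image_of_isCompact h2 hφ.continuousOn ?_
    have : ContinuousOn (fun p : EuclideanSpace ℝ (Fin d) × ℝ => φ (stretch p.2 p.1))
        ((closedBall (0 : EuclideanSpace ℝ (Fin d)) 1) ×ˢ Icc (0 : ℝ) 1) :=
      h.continuous.comp_continuousOn (continuousOn_stretch.mono
        (prod_mono (subset_univ _) Icc_subset_Iic_self))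
    exact this.congr fun p hp => h.cellDeform_apply hp.2.1 p.1

end cell

/-! ### Pushing maps off high-dimensional cells -/

/-- Maps from `X` to `K` can be pushed from `B` into `A`: a map `F` that sends the closed set `Y`
into `B` can be changed inside `Y`, keeping its values in `B` and without moving the points that
already lie in `A`, so as to send a given closed set `T ⊆ interior Y` into `A`. -/
def Pushable (X : Type) [TopologicalSpace X] {K : Type} [TopologicalSpace K] (A B : Set K) : Prop :=
  ∀ (F : X → K) (Y T : Set X), Continuous F → IsClosed Y → IsClosed T → T ⊆ interior Y →
    MapsTo F Y B → ∃ F' : X → K, Continuous F' ∧ (∀ x, x ∉ Y → F' x = F x) ∧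
      (∀ x, F x ∈ A → F' x = F x) ∧ MapsTo F' T A ∧ MapsTo F' Y B

theorem Pushable.refl (X : Type) [TopologicalSpace X] {K : Type} [TopologicalSpace K] (A : Set K) :
    Pushable X A A := fun F _ _ hF _ _ hTY hYA =>
  ⟨F, hF, fun _ _ => rfl, fun _ _ => rfl, fun _ hx => hYA (interior_subset (hTY hx)), hYA⟩

theorem Pushable.trans {X : Type} [TopologicalSpace X] [NormalSpace X] {K : Type}
    [TopologicalSpace K] {A B C : Set K} (hAB : A ⊆ B) (hBC : B ⊆ C) (h1 : Pushable X A B)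
    (h2 : Pushable X B C) : Pushable X A C := by
  intro F Y T hF hY hT hTY hFY
  obtain ⟨O, hO, hTO, hOY⟩ := normal_exists_closure_subset hT isOpen_interior hTY
  obtain ⟨F1, hF1, hF1Y, hF1B, hF1T, hF1C⟩ := h2 F Y (closure O) hF hY isClosed_closure hOY hFY
  obtain ⟨F2, hF2, hF2Y, hF2A, hF2T, hF2B⟩ := h1 F1 (closure O) T hF1 isClosed_closure hT
    (hTO.trans (interior_maximal subset_closure hO)) hF1T
  have hOY' : closure O ⊆ Y := hOY.trans interior_subset
  refine ⟨F2, hF2, fun x hx => ?_, fun x hx => ?_, hF2T, fun x hx => ?_⟩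
  · rw [hF2Y x (fun h => hx (hOY' h)), hF1Y x hx]
  · have h : F1 x = F x := hF1B x (hAB hx)
    rw [hF2A x (h ▸ hx), h]
  · by_cases hxO : x ∈ closure O
    · exact hBC (hF2B hxO)
    · rw [hF2Y x hxO]; exact hF1C hx

/-- If `S^(d-1) ∈ AE(X)` then maps from `X` can be pushed off a `d`-cell: the part of the map
inside the half-size ball is replaced by a map into its boundary sphere, and then everything is
pushed radially outwards. A cut-off function `l` interpolates between the given map and the new
one. -/
theorem pushable_of_attachesCell {X : Type} [TopologicalSpace X] [NormalSpace X] {K : Type}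
    [TopologicalSpace K] [T2Space K] {d : ℕ} {A B : Set K} (hX : NonvanishingExtension X d)
    (hA : IsClosed A) (hAB : AttachesCell d A B) : Pushable X A B := by
  classical
  obtain ⟨φ, h, rfl⟩ := hAB
  intro F Y T hF hY hT hTY hFY
  obtain ⟨l, hl0, hl1, hl01⟩ := exists_continuous_zero_one_of_isClosed
    (isOpen_interior (s := Y)).isClosed_compl hT
    (disjoint_left.2 fun x hx hxT => hx (hTY hxT))
  have hsub : closedBall (0 : EuclideanSpace ℝ (Fin d)) (1 / 2) ⊆ ball 0 1 :=
    closedBall_subset_ball (by norm_num)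
  -- the inverse of `φ` on the half-size ball
  set s : K → EuclideanSpace ℝ (Fin d) := Function.invFunOn φ (closedBall 0 (1 / 2)) with hs
  have hinv : ∀ y ∈ closedBall (0 : EuclideanSpace ℝ (Fin d)) (1 / 2), s (φ y) = y :=
    fun y hy => (h.injOn.mono hsub).leftInvOn_invFunOn hy
  have hscont : ContinuousOn s (φ '' closedBall 0 (1 / 2)) :=
    continuousOn_image_of_isCompact (isCompact_closedBall _ _) h.continuous.continuousOn
      (continuousOn_id.congr hinv)
  have hD : IsClosed (φ '' closedBall 0 (1 / 2)) :=
    ((isCompact_closedBall _ _).image h.continuous).isClosed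
  have hS : IsClosed (φ '' sphere 0 (1 / 2)) :=
    ((isCompact_sphere _ _).image h.continuous).isClosed
  set Z : Set X := Y ∩ F ⁻¹' (φ '' closedBall 0 (1 / 2)) with hZ
  have hZc : IsClosed Z := hY.inter (hD.preimage hF)
  have hsZ : ContinuousOn (fun x => s (F x)) Z :=
    hscont.comp hF.continuousOn fun x hx => hx.2
  have hZF : ∀ x ∈ Z, ‖s (F x)‖ ≤ 1 / 2 ∧ φ (s (F x)) = F x := by
    rintro x ⟨-, y, hy, hyx⟩
    rw [← hyx, hinv y hy]
    exact ⟨by simpa using hy, rfl⟩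
  have hZA : ∀ x ∈ Z, F x ∉ A := by
    intro x hx
    rw [← (hZF x hx).2]
    exact h.notMem _ (lt_of_le_of_lt (hZF x hx).1 (by norm_num))
  have hSD : φ '' sphere 0 (1 / 2) ⊆ φ '' closedBall 0 (1 / 2) := image_mono sphere_subset_closedBall
  set Z' : Set X := Y ∩ F ⁻¹' (φ '' sphere 0 (1 / 2)) with hZ'
  have hZ'Z : Z' ⊆ Z := fun x hx => ⟨hx.1, hSD hx.2⟩
  have hZ'n : ∀ x ∈ Z', ‖s (F x)‖ = 1 / 2 := by
    rintro x ⟨-, y, hy, hyx⟩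
    rw [← hyx, hinv y (sphere_subset_closedBall hy)]
    simpa using hy
  obtain ⟨e0, he0, he00, he0s⟩ := hX.euclidean (A := Z') (hY.inter (hS.preimage hF))
    (hsZ.mono hZ'Z) (fun x hx h0 => by
      have := hZ'n x hx
      rw [h0] at this; norm_num at this)
  set e : X → EuclideanSpace ℝ (Fin d) := fun x => (2 * ‖e0 x‖)⁻¹ • e0 x with he
  have hec : Continuous e := by
    have h1 : Continuous fun x => 2 * ‖e0 x‖ := by fun_prop
    refine (h1.inv₀ fun x => ?_).smul he0
    have := norm_pos_iff.2 (he00 x); positivity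
  have hen : ∀ x, ‖e x‖ = 1 / 2 := by
    intro x
    have := norm_pos_iff.2 (he00 x)
    rw [he, norm_smul, norm_inv, Real.norm_of_nonneg (by positivity)]
    field_simp
  have hes : ∀ x ∈ Z', e x = s (F x) := by
    intro x hx
    have h1 : e0 x = s (F x) := he0s hx
    simp only [he]
    rw [h1, hZ'n x hx]; norm_num
  -- replace the map inside the half-size ball
  set G : X → K := fun x => if x ∈ Z then φ ((1 - l x) • s (F x) + l x • e x) else F x with hG
  set S1 : Set (EuclideanSpace ℝ (Fin d)) := closedBall 0 1 \ ball 0 (1 / 2) with hS1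
  have hS1c : IsClosed (φ '' S1) :=
    (((isCompact_closedBall _ _).diff isOpen_ball).image h.continuous).isClosed
  set R : Set X := (interior Y)ᶜ ∪ (Y ∩ F ⁻¹' (A ∪ φ '' S1)) with hR
  have hRc : IsClosed R := (isOpen_interior.isClosed_compl).union
    (hY.inter ((hA.union hS1c).preimage hF))
  have hGR : EqOn G F R := by
    intro x hx
    by_cases hxZ : x ∈ Z
    · simp only [hG, hxZ, if_true]
      rcases hx with hx | ⟨hxY, hx | ⟨y, ⟨hy1, hy2⟩, hyx⟩⟩
      · have : l x = 0 := hl0 hx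
        simp [this, (hZF x hxZ).2]
      · exact absurd hx (hZA x hxZ)
      · rw [mem_closedBall_zero_iff] at hy1
        rw [mem_ball_zero_iff, not_lt] at hy2
        rcases hy1.eq_or_lt with hy1 | hy1
        · exact absurd (hyx ▸ h.mem y hy1.ge) (hZA x hxZ)
        · have hys : y = s (F x) := h.injOn (by simpa using hy1)
            (hsub (by simpa using (hZF x hxZ).1)) (hyx.trans (hZF x hxZ).2.symm)
          have hyn : ‖y‖ = 1 / 2 := le_antisymm (hys ▸ (hZF x hxZ).1) hy2
          rw [hes x ⟨hxY, y, by simpa using hyn, hyx⟩, ← add_smul]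
          simpa using (hZF x hxZ).2
    · simp [hG, hxZ]
  have hZR : ∀ x, x ∈ Z ∨ x ∈ R := by
    intro x
    by_cases hx : x ∈ interior Y
    · have hxY := interior_subset hx
      rcases hFY hxY with hx' | hx'
      · exact Or.inr (Or.inr ⟨hxY, Or.inl hx'⟩)
      · rw [h.range_eq] at hx'
        obtain ⟨y, hy, hyx⟩ := hx'
        by_cases hy2 : y ∈ ball 0 (1 / 2)
        · exact Or.inl ⟨hxY, y, ball_subset_closedBall hy2, hyx⟩
        · exact Or.inr (Or.inr ⟨hxY, Or.inr ⟨y, ⟨hy, hy2⟩, hyx⟩⟩)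
    · exact Or.inr (Or.inl hx)
  have hGZ : ContinuousOn G Z := by
    have : ContinuousOn (fun x => φ ((1 - l x) • s (F x) + l x • e x)) Z := by
      refine h.continuous.comp_continuousOn ?_
      have hl := l.continuous
      have h1 : ContinuousOn (fun x => 1 - l x) Z := by fun_prop
      have h2 : Continuous fun x => l x • e x := hl.smul hec
      exact (h1.smul hsZ).add h2.continuousOn
    exact this.congr fun x hx => by simp [hG, hx]
  have hGc : Continuous G :=
    continuous_of_isClosed_cover hZc hRc hZR hGZ (hF.continuousOn.congr hGR)
  have hGY : MapsTo G Y (A ∪ range φ) := by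
    intro x hx
    by_cases hxZ : x ∈ Z
    · simp only [hG, hxZ, if_true]; exact Or.inr ⟨_, rfl⟩
    · simp only [hG, hxZ, if_false]; exact hFY hx
  have hGF : ∀ x, x ∉ Z → G x = F x := fun x hx => by simp [hG, hx]
  -- push radially outwards
  refine ⟨fun x => if x ∈ Y then cellDeform A φ (G x) (l x) else G x, ?_, ?_, ?_, ?_, ?_⟩
  · refine continuous_of_isClosed_cover hY (isOpen_interior (s := Y)).isClosed_compl
      (fun x => ?_) ?_ ?_
    · by_cases hx : x ∈ interior Y
      · exact Or.inl (interior_subset hx)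
      · exact Or.inr hx
    · have : ContinuousOn (fun x => cellDeform A φ (G x) (l x)) Y :=
        (h.continuousOn_cellDeform hA).comp (f := fun x => (G x, l x))
          (hGc.prodMk l.continuous).continuousOn fun x hx => ⟨hGY hx, hl01 x⟩
      exact this.congr fun x hx => by simp [hx]
    · refine hGc.continuousOn.congr fun x hx => ?_
      by_cases hxY : x ∈ Y
      · have : l x = 0 := hl0 hx
        simp only [hxY, if_true, this]
        exact h.cellDeform_zero (hGY hxY)
      · simp [hxY]
  · intro x hx
    simp only [hx, if_false]
    exact hGF x fun h => hx h.1
  · intro x hx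
    have h1 : G x = F x := hGF x fun h => hZA x h hx
    by_cases hxY : x ∈ Y
    · simp only [hxY, if_true]
      rw [h1, cellDeform_of_mem hx]
    · simp only [hxY, if_false, h1]
  · intro x hx
    have hxY : x ∈ Y := interior_subset (hTY hx)
    have hlx : l x = 1 := hl1 hx
    simp only [hxY, if_true, hlx]
    by_cases hxZ : x ∈ Z
    · have : G x = φ (e x) := by simp [hG, hxZ, hlx]
      rw [this, h.cellDeform_apply zero_le_one]
      exact h.mem _ (norm_stretch_eq_one (hen x).ge).ge
    · rw [hGF x hxZ]
      rcases hFY hxY with hx' | ⟨y, hy⟩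
      · rwa [cellDeform_of_mem hx']
      · rw [← hy, h.cellDeform_apply zero_le_one]
        refine h.mem _ (norm_stretch_eq_one ?_).ge
        by_contra! hlt
        exact hxZ ⟨hxY, y, by simpa using hlt.le, hy⟩
  · intro x hx
    simp only [hx, if_true]
    exact h.cellDeform_mem (hGY hx) (hl01 x).1

/-- `M ∈ AE(X)` for a subset `M` of `K`, in terms of total functions. -/
def IsAESet (X : Type) [TopologicalSpace X] {K : Type} [TopologicalSpace K] (M : Set K) : Prop :=
  ∀ (A : Set X) (f : X → K), IsClosed A → ContinuousOn f A → MapsTo f A M →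
    ∃ F : X → K, Continuous F ∧ EqOn F f A ∧ ∀ x, F x ∈ M

/-- If `K` is exhausted by the sets `M n` in such a way that every compact set is contained in
some `M n`, and maps can be pushed from `M n` to `M 0`, then `K ∈ AE(X)` implies
`M 0 ∈ AE(X)`. In a metrizable space, an extension `F : X → K` locally takes values in one `M n`,
so it is possible to push larger and larger pieces of `X` into `M 0`. -/
theorem isAESet_of_pushable {X : Type} [TopologicalSpace X] [MetrizableSpace X] {K : Type}
    [TopologicalSpace K] (M : ℕ → Set K) (hmono : Monotone M)
    (hcomp : ∀ C : Set K, IsCompact C → ∃ n, C ⊆ M n)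
    (hpush : ∀ n, Pushable X (M 0) (M n)) (hK : IsAESet X (univ : Set K)) : IsAESet X (M 0) := by
  intro A f hA hf hfM
  obtain ⟨F, hF, hFf, -⟩ := hK A f hA hf (mapsTo_univ _ _)
  let _ := metrizableSpaceMetric X
  -- every point has a neighbourhood that is mapped into one of the `M n`
  have hloc : ∀ x, ∃ n, x ∈ interior (F ⁻¹' M n) := by
    intro x
    by_contra! hcon
    have h1 : ∀ n : ℕ, ∃ y, dist y x < 1 / ((n : ℝ) + 1) ∧ F y ∉ M n := by
      intro n
      by_contra! hc
      refine hcon n (mem_interior_iff_mem_nhds.2 (Metric.mem_nhds_iff.2 ⟨1 / ((n : ℝ) + 1),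
        by positivity, fun y hy => hc y hy⟩))
    choose y hy hyM using h1
    have hlim : Filter.Tendsto y Filter.atTop (𝓝 x) := by
      rw [tendsto_iff_dist_tendsto_zero]
      exact squeeze_zero (fun _ => dist_nonneg) (fun n => (hy n).le)
        tendsto_one_div_add_atTop_nhds_zero_nat
    obtain ⟨n, hn⟩ := hcomp _ (hlim.isCompact_insert_range.image hF)
    exact hyM n (hn ⟨y n, Or.inr ⟨n, rfl⟩, rfl⟩)
  set W : ℕ → Set X := fun n => interior (F ⁻¹' M n) with hW
  have hWmono : Monotone W := fun a b hab => interior_mono (preimage_mono (hmono hab))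
  -- an exhaustion of `X` by closed sets, each in the interior of the next one
  set P : ℕ → Set X := fun n => {x | ENNReal.ofReal (1 / ((n : ℝ) + 1)) ≤ infEDist x (W n)ᶜ} with hP
  have hPc : ∀ n, IsClosed (P n) := fun n => isClosed_le continuous_const continuous_infEDist
  have hPW : ∀ n, P n ⊆ W n := by
    intro n x hx
    by_contra hxW
    have : infEDist x (W n)ᶜ = 0 := infEDist_zero_of_mem hxW
    simp only [hP, mem_ofPred_eq, this, nonpos_iff_eq_zero, ENNReal.ofReal_eq_zero] at hx
    have : 0 < 1 / ((n : ℝ) + 1) := by positivity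
    linarith
  have hPint : ∀ n, P n ⊆ interior (P (n + 1)) := by
    intro n x hx
    have ho : IsOpen {x | ENNReal.ofReal (1 / (((n + 1 : ℕ) : ℝ) + 1)) < infEDist x (W (n + 1))ᶜ} :=
      isOpen_lt continuous_const continuous_infEDist
    have hsub : {x | ENNReal.ofReal (1 / (((n + 1 : ℕ) : ℝ) + 1)) < infEDist x (W (n + 1))ᶜ} ⊆
        P (n + 1) := fun y hy => le_of_lt (mem_ofPred_eq ▸ hy)
    refine interior_maximal hsub ho ?_
    have h1 : infEDist x (W n)ᶜ ≤ infEDist x (W (n + 1))ᶜ :=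
      infEDist_anti (compl_subset_compl.2 (hWmono (Nat.le_succ n)))
    refine lt_of_lt_of_le ?_ (le_trans hx h1)
    rw [ENNReal.ofReal_lt_ofReal_iff (by positivity)]
    apply one_div_lt_one_div_of_lt (by positivity)
    push_cast; linarith
  have hPmono : Monotone P :=
    monotone_nat_of_le_succ fun n => (hPint n).trans interior_subset
  have hPcov : ∀ x, ∃ n, x ∈ P n := by
    intro x
    obtain ⟨n, hn⟩ := hloc x
    obtain ⟨ε, hε, hball⟩ := Metric.isOpen_iff.1 (isOpen_interior (s := F ⁻¹' M n)) x hn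
    obtain ⟨m, hm⟩ := exists_nat_one_div_lt hε
    refine ⟨max n m, ?_⟩
    have hb : ball x ε ⊆ W (max n m) := hball.trans (hWmono (le_max_left n m))
    simp only [hP, mem_ofPred_eq]
    rw [le_infEDist]
    intro y hy
    have hy2 : ε ≤ dist x y := by
      by_contra! hlt
      exact hy (hb (by rwa [mem_ball, dist_comm]))
    rw [edist_dist]
    refine ENNReal.ofReal_le_ofReal (le_trans ?_ (le_trans hm.le hy2))
    apply one_div_le_one_div_of_le (by positivity)
    have : (m : ℝ) ≤ (max n m : ℕ) := by exact_mod_cast le_max_right n m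
    linarith
  -- the successive maps, the `n`-th of which sends `P (n - 1)` into `M 0`
  have hstep : ∀ n : ℕ, ∀ f0 : {f0 : X → K // Continuous f0 ∧ ∀ m, n ≤ m → MapsTo f0 (P m) (M m)},
      ∃ f1 : {f1 : X → K // Continuous f1 ∧ ∀ m, n + 1 ≤ m → MapsTo f1 (P m) (M m)},
        (∀ x, f0.1 x ∈ M 0 → f1.1 x = f0.1 x) ∧ MapsTo f1.1 (P n) (M 0) := by
    rintro n ⟨f0, hf0, hf0M⟩
    obtain ⟨f1, hf1, h1, h2, h3, h4⟩ := hpush (n + 1) f0 (P (n + 1)) (P n) hf0 (hPc _) (hPc _)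
      (hPint n) (hf0M (n + 1) (Nat.le_succ n))
    refine ⟨⟨f1, hf1, fun m hm x hx => ?_⟩, h2, h3⟩
    by_cases hxP : x ∈ P (n + 1)
    · exact hmono hm (h4 hxP)
    · rw [h1 x hxP]; exact hf0M m (by omega) hx
  choose next hnext1 hnext2 using hstep
  let seq : (n : ℕ) → {f0 : X → K // Continuous f0 ∧ ∀ m, n ≤ m → MapsTo f0 (P m) (M m)} :=
    fun n => Nat.rec ⟨F, hF, fun m _ x hx =>
      show x ∈ F ⁻¹' M m from interior_subset (hPW m hx)⟩ (fun n g => next n g) n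
  have hseq : ∀ n, seq (n + 1) = next n (seq n) := fun n => rfl
  have hstay : ∀ n x, (seq n).1 x ∈ M 0 → ∀ m, n ≤ m → (seq m).1 x = (seq n).1 x := by
    intro n x hx m hm
    induction m, hm using Nat.le_induction with
    | base => rfl
    | succ m _ ih => rw [hseq, hnext1 m (seq m) x (ih ▸ hx), ih]
  have hin : ∀ n x, x ∈ P n → (seq (n + 1)).1 x ∈ M 0 := fun n x hx => by
    rw [hseq]; exact hnext2 n (seq n) hx
  choose N hN using hPcov
  have hlimit : ∀ n x, x ∈ P n → (seq (N x + 1)).1 x = (seq (n + 1)).1 x := by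
    intro n x hx
    rcases le_total n (N x) with h | h
    · exact hstay (n + 1) x (hin n x hx) (N x + 1) (by omega)
    · exact (hstay (N x + 1) x (hin _ x (hN x)) (n + 1) (by omega)).symm
  refine ⟨fun x => (seq (N x + 1)).1 x, ?_, ?_, fun x => hin _ x (hN x)⟩
  · rw [continuous_iff_continuousAt]
    intro x
    have hx : P (N x + 1) ∈ 𝓝 x := mem_interior_iff_mem_nhds.1 (hPint _ (hN x))
    refine ((seq (N x + 1 + 1)).2.1.continuousAt (x := x)).congr ?_
    filter_upwards [hx] with y hy using (hlimit _ y hy).symm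
  · intro x hx
    have h0 : (seq 0).1 x = f x := hFf hx
    change (seq (N x + 1)).1 x = f x
    exact (hstay 0 x (by rw [h0]; exact hfM hx) (N x + 1) (Nat.zero_le _)).trans h0

/-! ### Neighbourhood retracts of finite-dimensional spaces -/

/-- `M` is homeomorphic, by a map `j`, to a retract of an open subset `U` of a finite-dimensional
normed space; the retraction is composed with the inverse of `j` to a map `r : U → M`. -/
def IsEuclideanRetract {K : Type} [TopologicalSpace K] (M : Set K) : Prop :=
  ∃ (E : Type) (_ : NormedAddCommGroup E) (_ : NormedSpace ℝ E) (_ : FiniteDimensional ℝ E)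
    (j : K → E) (U : Set E) (r : E → K), ContinuousOn j M ∧ IsOpen U ∧ MapsTo j M U ∧
      ContinuousOn r U ∧ MapsTo r U M ∧ ∀ m ∈ M, r (j m) = m

theorem isEuclideanRetract_empty {K : Type} [TopologicalSpace K] [Nonempty K] :
    IsEuclideanRetract (∅ : Set K) := by
  refine ⟨ℝ, inferInstance, inferInstance, inferInstance, fun _ => 0, ∅,
    fun _ => Classical.arbitrary K, ?_⟩
  simp [MapsTo]

/-- A continuous injection `J` on a compact set is an embedding with closed image, so convergence
of `J ∘ v` forces convergence of `v`. -/
theorem exists_tendsto_of_isCompact {ι K Z : Type*} [TopologicalSpace K] [T2Space K]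
    [TopologicalSpace Z] [T2Space Z] {B : Set K} (hB : IsCompact B) {J : K → Z} (hJ : ContinuousOn J B)
    (hinj : InjOn J B) {l : Filter ι} [l.NeBot] {v : ι → K} (hv : ∀ᶠ i in l, v i ∈ B) {z : Z}
    (hz : Filter.Tendsto (fun i => J (v i)) l (𝓝 z)) :
    ∃ b ∈ B, J b = z ∧ Filter.Tendsto v l (𝓝 b) := by
  have hv' : Filter.map v l ≤ Filter.principal B := Filter.le_principal_iff.2 hv
  have key : ∀ b ∈ B, ClusterPt b (Filter.map v l) → J b = z := by
    intro b hb hcl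
    have h1 : ClusterPt b (Filter.map v l ⊓ Filter.principal B) := by
      rwa [inf_eq_left.2 hv']
    have h2 : (𝓝[B] b ⊓ Filter.map v l).NeBot := by
      rw [nhdsWithin, inf_assoc, inf_comm (Filter.principal B)]
      exact h1
    have h3 : Filter.Tendsto J (𝓝[B] b ⊓ Filter.map v l) (𝓝 (J b)) :=
      Filter.Tendsto.mono_left (hJ b hb) inf_le_left
    have h4 : Filter.Tendsto J (𝓝[B] b ⊓ Filter.map v l) (𝓝 z) :=
      Filter.Tendsto.mono_left (Filter.tendsto_map'_iff.2 hz) inf_le_right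
    exact tendsto_nhds_unique h3 h4
  obtain ⟨b, hb, hcl⟩ := hB (f := Filter.map v l) hv'
  refine ⟨b, hb, key b hb hcl, ?_⟩
  refine hB.le_nhds_of_unique_clusterPt hv fun c hc hcc => ?_
  exact hinj hc hb ((key c hc hcc).trans (key b hb hcl).symm)

section cone
variable {K : Type} [TopologicalSpace K] {d : ℕ} {A : Set K}
  {φ : EuclideanSpace ℝ (Fin d) → K} {E : Type} [NormedAddCommGroup E] [NormedSpace ℝ E]
  {j : K → E}

/-- An extension of the map `j ∘ φ` from the complement of the open unit ball to `ℝ^d`,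
which is constant on the part of each ray outside the ball of radius `1/2`. -/
noncomputable def coneMap (φ : EuclideanSpace ℝ (Fin d) → K) (j : K → E)
    (y : EuclideanSpace ℝ (Fin d)) : E :=
  min 1 (2 * ‖y‖) • j (φ (‖y‖⁻¹ • y))

theorem norm_inv_smul {y : EuclideanSpace ℝ (Fin d)} (hy : y ≠ 0) : ‖‖y‖⁻¹ • y‖ = 1 := by
  rw [norm_smul, norm_inv, norm_norm, inv_mul_cancel₀ (norm_ne_zero_iff.2 hy)]

theorem coneMap_of_half_le {y : EuclideanSpace ℝ (Fin d)} (hy : 1 / 2 ≤ ‖y‖) :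
    coneMap φ j y = j (φ (‖y‖⁻¹ • y)) := by
  rw [coneMap, min_eq_left (by linarith), one_smul]

theorem stretch_one_of_half_le {y : EuclideanSpace ℝ (Fin d)} (hy : 1 / 2 ≤ ‖y‖) :
    stretch 1 y = ‖y‖⁻¹ • y := by
  rw [stretch, max_eq_right (by linarith)]

theorem IsCellMap.coneMap_of_one_le (h : IsCellMap A φ) {y : EuclideanSpace ℝ (Fin d)}
    (hy : 1 ≤ ‖y‖) : coneMap φ j y = j (φ y) := by
  rw [coneMap_of_half_le (by linarith), ← stretch_one_of_half_le (by linarith),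
    h.apply_stretch_of_one_le zero_le_one hy]

theorem half_le_norm_stretch {t : ℝ} (ht : t ∈ Icc (0 : ℝ) 1) {y : EuclideanSpace ℝ (Fin d)}
    (hy : 1 / 2 ≤ ‖y‖) : min 1 ‖y‖ ≤ ‖stretch t y‖ := by
  have hp := stretch_pos ht.2 y
  rw [norm_stretch ht.2, inv_mul_eq_div, le_div_iff₀ hp]
  rcases le_total 1 ‖y‖ with h1 | h1
  · rw [min_eq_left h1, one_mul]
    exact max_le (by linarith [ht.1]) le_rfl
  · rw [min_eq_right h1]
    have : max (1 - t / 2) ‖y‖ ≤ 1 := max_le (by linarith [ht.1]) h1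
    nlinarith

theorem coneMap_stretch {t : ℝ} (ht : t ∈ Icc (0 : ℝ) 1) {y : EuclideanSpace ℝ (Fin d)}
    (hy : 1 / 2 ≤ ‖y‖) : coneMap φ j (stretch t y) = coneMap φ j y := by
  have h1 : 1 / 2 ≤ ‖stretch t y‖ :=
    le_trans (le_min (by norm_num) hy) (half_le_norm_stretch ht hy)
  have hp := stretch_pos ht.2 y
  rw [coneMap_of_half_le h1, coneMap_of_half_le hy, norm_stretch ht.2, stretch, smul_smul,
    mul_inv, inv_inv, mul_right_comm, mul_inv_cancel₀ hp.ne', one_mul]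

theorem IsCellMap.continuous_coneMap (h : IsCellMap A φ) (hA : IsCompact A)
    (hj : ContinuousOn j A) : Continuous (coneMap φ j) := by
  rw [continuous_iff_continuousAt]
  intro y
  by_cases hy : y = 0
  · subst hy
    obtain ⟨C, hC⟩ := (hA.image_of_continuousOn hj).isBounded.exists_norm_le
    have hle : ∀ y, ‖coneMap φ j y‖ ≤ 2 * ‖y‖ * C := by
      intro y
      by_cases hy : y = 0
      · simp [hy, coneMap]
      · have h1 : ‖j (φ (‖y‖⁻¹ • y))‖ ≤ C :=
          hC _ ⟨_, h.mem _ (norm_inv_smul hy).ge, rfl⟩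
        rw [coneMap, norm_smul, Real.norm_of_nonneg (le_min zero_le_one (by positivity))]
        exact mul_le_mul (min_le_right _ _) h1 (norm_nonneg _) (by positivity)
    have h0 : coneMap φ j 0 = 0 := by simp [coneMap]
    rw [ContinuousAt, h0]
    refine squeeze_zero_norm hle ?_
    have : Continuous fun y : EuclideanSpace ℝ (Fin d) => 2 * ‖y‖ * C := by fun_prop
    simpa using this.tendsto 0
  · have ho : IsOpen {y : EuclideanSpace ℝ (Fin d) | y ≠ 0} := isOpen_ne
    refine ContinuousOn.continuousAt (s := {y | y ≠ 0}) ?_ (ho.mem_nhds hy)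
    have h1 : ContinuousOn (fun y : EuclideanSpace ℝ (Fin d) => ‖y‖⁻¹ • y) {y | y ≠ 0} :=
      (continuous_norm.continuousOn.inv₀ fun y hy => norm_ne_zero_iff.2 hy).smul continuousOn_id
    have h2 : ContinuousOn (fun y => j (φ (‖y‖⁻¹ • y))) {y | y ≠ 0} :=
      hj.comp (h.continuous.comp_continuousOn h1) fun y hy => h.mem _ (norm_inv_smul hy).ge
    have h3 : Continuous fun y : EuclideanSpace ℝ (Fin d) => min 1 (2 * ‖y‖) := by fun_prop
    exact h3.continuousOn.smul h2

/-- The embedding of `A ∪ range φ` into `E × ℝ^d × ℝ` that extends the embedding `j` of `A`. The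
last component, `1 - ‖y‖` at `φ y`, is the height above `A`. -/
theorem IsCellMap.exists_embedding [T2Space K] (h : IsCellMap A φ) (hA : IsCompact A)
    (hj : ContinuousOn j A) (hinj : InjOn j A) :
    ∃ J : K → E × EuclideanSpace ℝ (Fin d) × ℝ, ContinuousOn J (A ∪ range φ) ∧
      InjOn J (A ∪ range φ) ∧ (∀ a ∈ A, J a = (j a, 0, 0)) ∧
      ∀ y, ‖y‖ ≤ 1 → J (φ y) = (coneMap φ j y, (1 - ‖y‖) • y, 1 - ‖y‖) := by
  classical
  set Ψ : EuclideanSpace ℝ (Fin d) → E × EuclideanSpace ℝ (Fin d) × ℝ :=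
    fun y => (coneMap φ j y, (1 - ‖y‖) • y, 1 - ‖y‖) with hΨ
  set J : K → E × EuclideanSpace ℝ (Fin d) × ℝ :=
    fun b => if b ∈ A then (j b, 0, 0) else Ψ (Function.invFunOn φ (ball 0 1) b) with hJ
  have hJA : ∀ a ∈ A, J a = (j a, 0, 0) := fun a ha => by simp [hJ, ha]
  have hJφ : ∀ y, ‖y‖ ≤ 1 → J (φ y) = Ψ y := by
    intro y hy
    rcases hy.eq_or_lt with hy | hy
    · rw [hJA _ (h.mem y hy.ge), hΨ]
      simp [hy, h.coneMap_of_one_le hy.ge]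
    · have := h.injOn.leftInvOn_invFunOn (show y ∈ ball 0 1 by simpa using hy)
      simp only [hJ, h.notMem y hy, if_false, this]
  have hΨc : Continuous Ψ := (h.continuous_coneMap hA hj).prodMk (by fun_prop)
  refine ⟨J, ?_, ?_, hJA, hJφ⟩
  · refine ContinuousOn.union_of_isClosed ?_ ?_ hA.isClosed h.isCompact_range.isClosed
    · exact (hj.prodMk continuousOn_const).congr fun a ha => hJA a ha
    · rw [h.range_eq]
      refine continuousOn_image_of_isCompact (isCompact_closedBall _ _) h.continuous.continuousOn
        (hΨc.continuousOn.congr fun y hy => hJφ y (by simpa using hy))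
  · have hcell : ∀ b ∈ A ∪ range φ, b ∉ A → ∃ y, ‖y‖ < 1 ∧ φ y = b := by
      rintro b (hb | hb) hbA
      · exact absurd hb hbA
      · obtain ⟨y, rfl⟩ := hb
        refine ⟨y, ?_, rfl⟩
        by_contra! hy
        exact hbA (h.mem y hy)
    intro b hb c hc hbc
    by_cases hbA : b ∈ A <;> by_cases hcA : c ∈ A
    · rw [hJA b hbA, hJA c hcA] at hbc
      exact hinj hbA hcA (Prod.mk.inj hbc).1
    · obtain ⟨y, hy, rfl⟩ := hcell c hc hcA
      rw [hJA b hbA, hJφ y hy.le] at hbc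
      have := (Prod.mk.inj (Prod.mk.inj hbc).2).2
      linarith
    · obtain ⟨y, hy, rfl⟩ := hcell b hb hbA
      rw [hJA c hcA, hJφ y hy.le] at hbc
      have := (Prod.mk.inj (Prod.mk.inj hbc).2).2
      linarith
    · obtain ⟨y, hy, rfl⟩ := hcell b hb hbA
      obtain ⟨z, hz, rfl⟩ := hcell c hc hcA
      rw [hJφ y hy.le, hJφ z hz.le] at hbc
      have h1 := (Prod.mk.inj (Prod.mk.inj hbc).2).2
      have h2 := (Prod.mk.inj (Prod.mk.inj hbc).2).1
      rw [← h1] at h2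
      rw [smul_right_injective _ (sub_pos.2 hy).ne' h2]

end cone

set_option maxHeartbeats 1000000 in
/-- Attaching a cell to a compact Euclidean neighbourhood retract gives a Euclidean neighbourhood
retract. The union `A ∪ range φ` is embedded in `E × ℝ^d × ℝ` by `IsCellMap.exists_embedding`.
The retraction `R` distinguishes two regions by the distance `θ` of a point from the embedded cell,
measured relative to its height. Where `θ ≤ 1/2`, the position in the cell is read off and
stretched outwards, reaching `A` (at small height) when `θ = 1/2`. Elsewhere the retraction `r` onto
`A` is applied to a point `w` that interpolates between the cone over the boundary of the cell and
the first component of the given point. Both formulas agree when `θ = 1/2`. -/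
theorem IsEuclideanRetract.attachesCell {K : Type} [TopologicalSpace K] [T2Space K] {d : ℕ}
    {A B : Set K} (hA : IsCompact A) (hret : IsEuclideanRetract A) (hAB : AttachesCell d A B) :
    IsEuclideanRetract B := by
  classical
  obtain ⟨φ, h, rfl⟩ := hAB
  obtain ⟨E, iE1, iE2, iE3, j, U, r, hj, hU, hjU, hr, hrA, hrj⟩ := hret
  have hinj : InjOn j A := fun a ha b hb hab => by rw [← hrj a ha, hab, hrj b hb]
  obtain ⟨J, hJ, hJinj, hJA, hJφ⟩ := h.exists_embedding hA hj hinj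
  have hBc : IsCompact (A ∪ range φ) := hA.union h.isCompact_range
  obtain ⟨ε₀, hε₀, hεU⟩ := (hA.image_of_continuousOn hj).exists_thickening_subset_open hU
    (mapsTo_iff_image_subset.1 hjU)
  obtain ⟨ε, hε, hε4, hε2⟩ : ∃ ε : ℝ, 0 < ε ∧ ε ≤ 1 / 4 ∧ 2 * ε ≤ ε₀ :=
    ⟨min (1 / 4) (ε₀ / 2), lt_min (by norm_num) (by linarith), min_le_left _ _,
      by linarith [min_le_right (1 / 4) (ε₀ / 2)]⟩
  have hcone := h.continuous_coneMap hA hj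
  -- Away from height zero: the position `yh` in the cell, the deviation `δ` of the remaining
  -- components from their values at that position, the deviation `θ` relative to the height, the
  -- interpolation `w` for `1/2 ≤ θ`, and the stretched position `s` for `θ ≤ 1/2`.
  set yh : E × EuclideanSpace ℝ (Fin d) × ℝ → EuclideanSpace ℝ (Fin d) :=
    fun p => p.2.2⁻¹ • p.2.1 with hyh
  set δ : E × EuclideanSpace ℝ (Fin d) × ℝ → ℝ :=
    fun p => ‖p.1 - coneMap φ j (yh p)‖ + |‖yh p‖ - (1 - p.2.2)| with hδ
  set θ : E × EuclideanSpace ℝ (Fin d) × ℝ → ℝ := fun p => min 1 (δ p / p.2.2) with hθ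
  set w : E × EuclideanSpace ℝ (Fin d) × ℝ → E := fun p =>
    if p.2.2 ≤ 0 then p.1 else (2 - 2 * θ p) • coneMap φ j (yh p) + (2 * θ p - 1) • p.1 with hw
  set s : E × EuclideanSpace ℝ (Fin d) × ℝ → EuclideanSpace ℝ (Fin d) :=
    fun p => stretch (2 * θ p) (yh p) with hs
  set T : Set (E × EuclideanSpace ℝ (Fin d) × ℝ) := {p | 0 < p.2.2} with hT
  have hTo : IsOpen T := isOpen_lt continuous_const (by fun_prop)
  have hyc : ContinuousOn yh T := by
    have h1 : Continuous fun p : E × EuclideanSpace ℝ (Fin d) × ℝ => p.2.2 := by fun_prop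
    have h2 : Continuous fun p : E × EuclideanSpace ℝ (Fin d) × ℝ => p.2.1 := by fun_prop
    exact (h1.continuousOn.inv₀ fun p hp => (show 0 < p.2.2 from hp).ne').smul h2.continuousOn
  have hcyc : ContinuousOn (fun p => coneMap φ j (yh p)) T := hcone.comp_continuousOn hyc
  have hδc : ContinuousOn δ T := by
    have h1 : Continuous fun p : E × EuclideanSpace ℝ (Fin d) × ℝ => p.1 := by fun_prop
    have h2 : Continuous fun p : E × EuclideanSpace ℝ (Fin d) × ℝ => 1 - p.2.2 := by fun_prop
    exact (h1.continuousOn.sub hcyc).norm.add (hyc.norm.sub h2.continuousOn).abs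
  have hθc : ContinuousOn θ T := by
    have h1 : Continuous fun p : E × EuclideanSpace ℝ (Fin d) × ℝ => p.2.2 := by fun_prop
    exact continuousOn_const.inf
      (hδc.div h1.continuousOn fun p hp => (show 0 < p.2.2 from hp).ne')
  have hδ0 : ∀ p, 0 ≤ δ p := fun p => by positivity
  have hθ01 : ∀ p ∈ T, θ p ∈ Icc (0 : ℝ) 1 := fun p hp =>
    ⟨le_min zero_le_one (div_nonneg (hδ0 p) (show 0 < p.2.2 from hp).le), min_le_left _ _⟩
  have hδθ : ∀ p ∈ T, θ p < 1 → δ p = θ p * p.2.2 := by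
    intro p hp hlt
    have hp' : 0 < p.2.2 := hp
    have h1 : θ p = δ p / p.2.2 := by
      rcases min_choice 1 (δ p / p.2.2) with h | h
      · exact absurd h hlt.ne
      · exact h
    rw [h1, div_mul_cancel₀ _ hp'.ne']
  have hwc : ContinuousOn w T := by
    have h0 : Continuous fun p : E × EuclideanSpace ℝ (Fin d) × ℝ => p.1 := by fun_prop
    have h1 : ContinuousOn (fun p => 2 - 2 * θ p) T := by fun_prop
    have h2 : ContinuousOn (fun p => 2 * θ p - 1) T := by fun_prop
    exact ((h1.smul hcyc).add (h2.smul h0.continuousOn)).congr fun p hp => by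
      simp [hw, not_le.2 (show 0 < p.2.2 from hp)]
  -- the point `w p` is near the first component of `p`
  have hwu : ∀ p, (0 < p.2.2 → 1 / 2 ≤ θ p) → ‖w p - p.1‖ ≤ max 0 p.2.2 := by
    intro p hp
    by_cases hp0 : p.2.2 ≤ 0
    · simp [hw, hp0]
    · have hpT : p ∈ T := not_le.1 hp0
      have hp' : 0 < p.2.2 := hpT
      have e : w p - p.1 = (2 - 2 * θ p) • (coneMap φ j (yh p) - p.1) := by
        simp only [hw, hp0, if_false, sub_smul, smul_sub, mul_smul, one_smul, two_smul]
        abel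
      have h1 := hθ01 p hpT
      rw [e, norm_smul, Real.norm_of_nonneg (by linarith [h1.2]), norm_sub_rev]
      refine le_trans ?_ (le_max_right _ _)
      rcases h1.2.eq_or_lt with h2 | h2
      · rw [h2]; simpa using hp'.le
      · have h3 : ‖p.1 - coneMap φ j (yh p)‖ ≤ θ p * p.2.2 := by
          rw [← hδθ p hpT h2]
          exact le_add_of_nonneg_right (abs_nonneg _)
        have h4 := hp hp'
        have h5 : (2 - 2 * θ p) * ‖p.1 - coneMap φ j (yh p)‖ ≤ (2 - 2 * θ p) * (θ p * p.2.2) :=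
          mul_le_mul_of_nonneg_left h3 (by linarith)
        have h6 : (2 - 2 * θ p) * θ p ≤ 1 := by nlinarith [sq_nonneg (2 * θ p - 1)]
        nlinarith
  have hyn : ∀ p ∈ T, θ p ≤ 1 / 2 → |‖yh p‖ - (1 - p.2.2)| ≤ p.2.2 / 2 ∧
      ‖p.1 - coneMap φ j (yh p)‖ ≤ p.2.2 / 2 := by
    intro p hp hpθ
    have hp' : 0 < p.2.2 := hp
    have h1 := hδθ p hp (by linarith)
    have h2 : δ p ≤ p.2.2 / 2 := by rw [h1]; nlinarith
    have h3 : δ p = ‖p.1 - coneMap φ j (yh p)‖ + |‖yh p‖ - (1 - p.2.2)| := rfl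
    have h4 := norm_nonneg (p.1 - coneMap φ j (yh p))
    have h5 := abs_nonneg (‖yh p‖ - (1 - p.2.2))
    constructor <;> linarith
  have hyhalf : ∀ p ∈ T, θ p ≤ 1 / 2 → p.2.2 ≤ 1 / 4 → 1 / 2 ≤ ‖yh p‖ := by
    intro p hp hpθ hp4
    have := (abs_le.1 (hyn p hp hpθ).1).1
    linarith
  set R : E × EuclideanSpace ℝ (Fin d) × ℝ → K := fun p =>
    if 0 < p.2.2 ∧ θ p ≤ 1 / 2 then φ (s p) else r (w p) with hR
  set P1 : Set (E × EuclideanSpace ℝ (Fin d) × ℝ) := T ∩ θ ⁻¹' Iio (1 / 2) with hP1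
  set P2 : Set (E × EuclideanSpace ℝ (Fin d) × ℝ) :=
    {p | p.1 ∈ thickening ε (j '' A) ∧ p.2.2 < ε} with hP2
  have hP1o : IsOpen P1 := hθc.isOpen_inter_preimage hTo isOpen_Iio
  have hP2o : IsOpen P2 :=
    (isOpen_thickening.preimage continuous_fst).inter
      (isOpen_lt (continuous_snd.comp continuous_snd) continuous_const)
  -- the values at the points of the embedded cell
  have hcell : ∀ y, ‖y‖ < 1 → J (φ y) ∈ P1 ∧ R (J (φ y)) = φ y := by
    intro y hy
    have e1 := hJφ y hy.le
    have hpos : 0 < 1 - ‖y‖ := by linarith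
    have e2 : (J (φ y)).2.2 = 1 - ‖y‖ := by rw [e1]
    have e3 : yh (J (φ y)) = y := by
      simp only [hyh, e1, smul_smul, inv_mul_cancel₀ hpos.ne', one_smul]
    have e4 : δ (J (φ y)) = 0 := by
      simp only [hδ, e3, e2]
      simp [e1]
    have e5 : θ (J (φ y)) = 0 := by simp [hθ, e4]
    have e6 : 0 < (J (φ y)).2.2 := by rw [e2]; exact hpos
    refine ⟨⟨e6, ?_⟩, ?_⟩
    · simp only [mem_preimage, e5, mem_Iio]; norm_num
    · have hc : 0 < (J (φ y)).2.2 ∧ θ (J (φ y)) ≤ 1 / 2 := ⟨e6, by rw [e5]; norm_num⟩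
      refine (if_pos hc).trans ?_
      simp only [hs, e3, e5, mul_zero, h.stretch_zero]
  have hwU : ∀ p ∈ P2, (0 < p.2.2 → 1 / 2 ≤ θ p) → w p ∈ U := by
    intro p hp hpθ
    apply hεU
    obtain ⟨a, ha, hpa⟩ := mem_thickening_iff.1 hp.1
    refine mem_thickening_iff.2 ⟨a, ha, ?_⟩
    have h1 := hwu p hpθ
    have h2 : max 0 p.2.2 < ε := max_lt hε hp.2
    have h3 := dist_triangle (w p) p.1 a
    rw [dist_eq_norm (w p) p.1] at h3
    linarith
  have hsc : ContinuousOn (fun p => φ (s p)) (T ∩ {p | θ p ≤ 1 / 2}) := by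
    refine h.continuous.comp_continuousOn ?_
    have h1 : ContinuousOn (fun p => (yh p, 2 * θ p)) (T ∩ {p | θ p ≤ 1 / 2}) :=
      (hyc.prodMk (continuousOn_const.mul hθc)).mono inter_subset_left
    exact continuousOn_stretch.comp (f := fun p => (yh p, 2 * θ p)) h1 fun p hp =>
      ⟨mem_univ _, by have : θ p ≤ 1 / 2 := hp.2; simp only [mem_Iic]; linarith⟩
  refine ⟨E × EuclideanSpace ℝ (Fin d) × ℝ, inferInstance, inferInstance, inferInstance, J,
    P1 ∪ P2, R, hJ, hP1o.union hP2o, ?_, ?_, ?_, ?_⟩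
  · intro b hb
    by_cases hbA : b ∈ A
    · right
      rw [hJA b hbA]
      exact ⟨self_subset_thickening hε _ ⟨b, hbA, rfl⟩, hε⟩
    · left
      obtain ⟨y, rfl⟩ := hb.resolve_left hbA
      refine (hcell y ?_).1
      by_contra! hy
      exact hbA (h.mem y hy)
  · intro p hp
    refine ContinuousAt.continuousWithinAt ?_
    by_cases hp1 : p ∈ P1
    · have h0 : ∀ q ∈ P1, θ q ≤ 1 / 2 := fun q hq => le_of_lt (mem_Iio.1 hq.2)
      have h1 : ContinuousOn R P1 := (hsc.mono fun q hq => ⟨hq.1, h0 q hq⟩).congr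
        fun q hq => if_pos ⟨hq.1, h0 q hq⟩
      exact h1.continuousAt (hP1o.mem_nhds hp1)
    have hp2 : p ∈ P2 := hp.resolve_left hp1
    have hpθ : 0 < p.2.2 → 1 / 2 ≤ θ p := fun hp0 => by
      by_contra! hlt
      exact hp1 ⟨hp0, hlt⟩
    -- at the points of `P2` outside `P1` both formulas agree
    have hRp : R p = r (w p) := by
      by_cases hc : 0 < p.2.2 ∧ θ p ≤ 1 / 2
      · have e1 : θ p = 1 / 2 := le_antisymm hc.2 (hpθ hc.1)
        have e2 : 1 / 2 ≤ ‖yh p‖ := hyhalf p hc.1 hc.2 (by linarith [hp2.2])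
        have e3 : φ (s p) ∈ A := by
          refine h.mem _ ?_
          simp only [hs, e1]
          norm_num
          exact (norm_stretch_eq_one e2).ge
        have e4 : w p = j (φ (s p)) := by
          simp only [hw, not_le.2 hc.1, if_false, hs, e1, coneMap_of_half_le e2]
          norm_num
          rw [stretch_one_of_half_le e2]
        rw [e4, hrj _ e3]
        exact if_pos hc
      · exact if_neg hc
    set D : Set (E × EuclideanSpace ℝ (Fin d) × ℝ) := {q | 0 < q.2.2 ∧ θ q ≤ 1 / 2} with hD
    have hτ : Filter.Tendsto (fun q : E × EuclideanSpace ℝ (Fin d) × ℝ => q.2.2) (𝓝 p)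
        (𝓝 p.2.2) := (continuous_snd.comp continuous_snd).continuousAt
    have hcompl : Filter.Tendsto R (𝓝[Dᶜ] p) (𝓝 (R p)) := by
      have hwt : Filter.Tendsto w (𝓝[Dᶜ] p) (𝓝 (w p)) := by
        by_cases hp0 : 0 < p.2.2
        · exact (hwc.continuousAt (hTo.mem_nhds hp0)).tendsto.mono_left nhdsWithin_le_nhds
        · have e : w p = p.1 := if_pos (not_lt.1 hp0)
          have h1 : Filter.Tendsto (fun q => w q - q.1) (𝓝[Dᶜ] p) (𝓝 0) := by
            refine squeeze_zero_norm' (a := fun q => max 0 q.2.2) ?_ ?_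
            · filter_upwards [self_mem_nhdsWithin] with q hq
              refine hwu q fun hq0 => ?_
              by_contra! hlt
              exact hq ⟨hq0, hlt.le⟩
            · have h2 : Filter.Tendsto
                  (fun q : E × EuclideanSpace ℝ (Fin d) × ℝ => max 0 q.2.2) (𝓝 p)
                  (𝓝 (max 0 p.2.2)) := tendsto_const_nhds.max hτ
              rw [max_eq_left (not_lt.1 hp0)] at h2
              exact h2.mono_left nhdsWithin_le_nhds
          have h3 : Filter.Tendsto (fun q : E × EuclideanSpace ℝ (Fin d) × ℝ => q.1) (𝓝[Dᶜ] p)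
              (𝓝 p.1) := continuous_fst.continuousAt.tendsto.mono_left nhdsWithin_le_nhds
          rw [e]
          simpa using h1.add h3
      rw [hRp]
      have h4 := (hr.continuousAt (hU.mem_nhds (hwU p hp2 hpθ))).tendsto.comp hwt
      refine h4.congr' ?_
      filter_upwards [self_mem_nhdsWithin] with q hq
      exact (if_neg hq).symm
    have hDt : Filter.Tendsto R (𝓝[D] p) (𝓝 (R p)) := by
      by_cases hp0 : 0 < p.2.2
      · by_cases hpD : θ p ≤ 1 / 2
        · have h1 : ContinuousOn R D := hsc.congr fun q hq => if_pos hq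
          exact h1 p ⟨hp0, hpD⟩
        · have h1 : T ∩ θ ⁻¹' Ioi (1 / 2) ∈ 𝓝 p :=
            (hθc.isOpen_inter_preimage hTo isOpen_Ioi).mem_nhds ⟨hp0, not_le.1 hpD⟩
          have h2 : 𝓝[D] p = ⊥ := by
            rw [← Filter.empty_mem_iff_bot]
            filter_upwards [self_mem_nhdsWithin, nhdsWithin_le_nhds h1] with q hq hq'
            exact absurd hq.2 (not_le.2 hq'.2)
          rw [h2]; exact Filter.tendsto_bot
      rcases Filter.eq_or_neBot (𝓝[D] p) with hbot | hne
      · rw [hbot]; exact Filter.tendsto_bot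
      -- the values in the cell converge to a point of `A`, as their images under `J` do
      have hτD : Filter.Tendsto (fun q : E × EuclideanSpace ℝ (Fin d) × ℝ => q.2.2) (𝓝[D] p)
          (𝓝 p.2.2) := hτ.mono_left nhdsWithin_le_nhds
      have hp00 : p.2.2 = 0 := by
        refine le_antisymm (not_lt.1 hp0) (ge_of_tendsto hτD ?_)
        filter_upwards [self_mem_nhdsWithin] with q hq using hq.1.le
      rw [hp00] at hτD
      have hsmall : ∀ᶠ q in 𝓝[D] p, q ∈ D ∧ q.2.2 ≤ 1 / 4 := by
        filter_upwards [self_mem_nhdsWithin,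
          hτD.eventually (eventually_le_nhds (show (0 : ℝ) < 1 / 4 by norm_num))] with q hq hq'
        exact ⟨hq, hq'⟩
      have hfacts : ∀ q, q ∈ D ∧ q.2.2 ≤ 1 / 4 → ‖s q‖ ≤ 1 ∧ 1 - ‖s q‖ ≤ 2 * q.2.2 ∧
          ‖coneMap φ j (s q) - q.1‖ ≤ q.2.2 := by
        rintro q ⟨⟨hq0, hqθ⟩, hq4⟩
        have h1 : 2 * θ q ∈ Icc (0 : ℝ) 1 := ⟨by linarith [(hθ01 q hq0).1], by linarith⟩
        have h2 := hyhalf q hq0 hqθ hq4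
        have h3 := hyn q hq0 hqθ
        have h4 := half_le_norm_stretch h1 h2
        refine ⟨norm_stretch_le h1.2 _, ?_, ?_⟩
        · have h5 := (abs_le.1 h3.1).1
          have h6 : 1 - 2 * q.2.2 ≤ min 1 ‖yh q‖ := le_min (by linarith) (by linarith)
          linarith [h6.trans h4]
        · rw [coneMap_stretch h1 h2, norm_sub_rev]
          linarith [h3.2]
      have ht1 : Filter.Tendsto (fun q => 1 - ‖s q‖) (𝓝[D] p) (𝓝 0) := by
        refine squeeze_zero' (g := fun q => 2 * q.2.2) ?_ ?_ ?_
        · filter_upwards [hsmall] with q hq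
          linarith [(hfacts q hq).1]
        · filter_upwards [hsmall] with q hq using (hfacts q hq).2.1
        · simpa using hτD.const_mul 2
      have ht2 : Filter.Tendsto (fun q => (1 - ‖s q‖) • s q) (𝓝[D] p) (𝓝 0) := by
        refine squeeze_zero_norm' ?_ ht1
        filter_upwards [hsmall] with q hq
        have h1 := (hfacts q hq).1
        rw [norm_smul, Real.norm_of_nonneg (by linarith)]
        exact mul_le_of_le_one_right (by linarith) h1
      have ht3 : Filter.Tendsto (fun q => coneMap φ j (s q)) (𝓝[D] p) (𝓝 p.1) := by
        have h1 : Filter.Tendsto (fun q => coneMap φ j (s q) - q.1) (𝓝[D] p) (𝓝 0) := by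
          refine squeeze_zero_norm' ?_ hτD
          filter_upwards [hsmall] with q hq using (hfacts q hq).2.2
        have h3 : Filter.Tendsto (fun q : E × EuclideanSpace ℝ (Fin d) × ℝ => q.1) (𝓝[D] p)
            (𝓝 p.1) := continuous_fst.continuousAt.tendsto.mono_left nhdsWithin_le_nhds
        simpa using h1.add h3
      have htJ : Filter.Tendsto (fun q => J (φ (s q))) (𝓝[D] p) (𝓝 (p.1, 0, 0)) := by
        refine (ht3.prodMk_nhds (ht2.prodMk_nhds ht1)).congr' ?_
        filter_upwards [hsmall] with q hq using (hJφ _ (hfacts q hq).1).symm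
      obtain ⟨b, hb, hbJ, hbt⟩ := exists_tendsto_of_isCompact hBc hJ hJinj
        (Filter.Eventually.of_forall fun q => Or.inr ⟨s q, rfl⟩) htJ
      have hbA : b ∈ A := by
        by_contra hbA
        obtain ⟨y, rfl⟩ := hb.resolve_left hbA
        have hy : ‖y‖ < 1 := by
          by_contra! hy
          exact hbA (h.mem y hy)
        rw [hJφ y hy.le] at hbJ
        have := (Prod.mk.inj (Prod.mk.inj hbJ).2).2
        linarith
      have e1 : w p = p.1 := if_pos hp00.le
      have e2 : j b = p.1 := by
        rw [hJA b hbA] at hbJ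
        exact (Prod.mk.inj hbJ).1
      rw [hRp, e1, ← e2, hrj b hbA]
      refine hbt.congr' ?_
      filter_upwards [self_mem_nhdsWithin] with q hq
      exact (if_pos hq).symm
    have := hDt.sup hcompl
    rwa [← nhdsWithin_union, union_compl_self, nhdsWithin_univ] at this
  · intro p hp
    by_cases hc : 0 < p.2.2 ∧ θ p ≤ 1 / 2
    · simp only [hR, hc, and_self, if_true]; exact Or.inr ⟨_, rfl⟩
    · simp only [hR, hc, if_false]
      rcases hp with hp | hp
      · exact absurd ⟨hp.1, le_of_lt hp.2⟩ hc
      · refine Or.inl (hrA (hwU p hp fun hp0 => ?_))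
        by_contra! hlt
        exact hc ⟨hp0, hlt.le⟩
  · intro b hb
    by_cases hbA : b ∈ A
    · have e : ¬ (0 < (J b).2.2 ∧ θ (J b) ≤ 1 / 2) := by rw [hJA b hbA]; simp
      have e2 : w (J b) = j b := by simp only [hw]; rw [hJA b hbA]; simp
      simp only [hR, e, if_false, e2, hrj b hbA]
    · obtain ⟨y, rfl⟩ := hb.resolve_left hbA
      refine (hcell y ?_).2
      by_contra! hy
      exact hbA (h.mem y hy)

/-! ### Construction of the compactification -/

/-- Replaces the coordinates of `z` with index greater than `m` by zero. -/
def trunc (m : ℕ) (z : ℕ → HilbertCube) : ℕ → HilbertCube := fun k => if k ≤ m then z k else 0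

theorem continuous_trunc (m : ℕ) : Continuous (trunc m) := by
  refine continuous_pi fun k => ?_
  by_cases hk : k ≤ m
  · simpa [trunc, hk] using continuous_apply k
  · simpa [trunc, hk] using continuous_const

theorem eventually_dist_trunc_lt {E : Type*} [PseudoMetricSpace E] {f : (ℕ → HilbertCube) → E}
    (hf : Continuous f) {η : ℝ} (hη : 0 < η) :
    ∃ m₀, ∀ m, m₀ ≤ m → ∀ z, dist (f (trunc m z)) (f z) < η := by
  have h1 := CompactSpace.uniformContinuous_of_continuous hf
  have h2 : Filter.Tendsto (fun p : ℕ × (ℕ → HilbertCube) => (trunc p.1 p.2, p.2))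
      (Filter.atTop ×ˢ ⊤) (uniformity (ℕ → HilbertCube)) := by
    rw [Pi.uniformity, Filter.tendsto_iInf]
    intro k
    rw [Filter.tendsto_comap_iff]
    refine Filter.Tendsto.mono_right ?_ refl_le_uniformity
    rw [Filter.tendsto_principal]
    have : ∀ᶠ m : ℕ in Filter.atTop, k ≤ m := Filter.eventually_ge_atTop k
    filter_upwards [this.prod_inl ⊤] with p hp
    simp [trunc, hp]
  have h3 := h2.eventually (h1 (dist_mem_uniformity hη))
  rw [Filter.eventually_prod_iff] at h3
  obtain ⟨pa, ha, pb, hb, hab⟩ := h3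
  obtain ⟨m₀, hm₀⟩ := Filter.eventually_atTop.1 ha
  refine ⟨m₀, fun m hm z => hab (hm₀ m hm) ?_⟩
  exact Filter.eventually_top.1 hb z

/-- For countably many extension problems, each consisting of a map `ρ n` on a closed subset
`C n` of a countable power of the Hilbert cube with values in `M (i n)`, there is an embedding
`e` of `X` such that for arbitrarily large `m` the map `ρ n ∘ trunc m ∘ e` has an extension that
is recorded in the coordinate `m + 1` of `e`. -/
theorem exists_embedding_recording {X K : Type} [TopologicalSpace X] [SeparableSpace X]
    [MetrizableSpace X] [TopologicalSpace K] (M : ℕ → Set K) (hAE : ∀ i, IsAESet X (M i))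
    (ι : ℕ → K → HilbertCube) (hι : ∀ i, ContinuousOn (ι i) (M i)) (i : ℕ → ℕ)
    (C : ℕ → Set (ℕ → HilbertCube)) (hC : ∀ n, IsClosed (C n))
    (ρ : ℕ → (ℕ → HilbertCube) → K) (hρ : ∀ n, ContinuousOn (ρ n) (C n))
    (hρM : ∀ n, MapsTo (ρ n) (C n) (M (i n))) :
    ∃ e : X → ℕ → HilbertCube, IsEmbedding e ∧ ∀ n m₀, ∃ m, m₀ ≤ m ∧ ∃ F : X → K,
      (∀ x, F x ∈ M (i n)) ∧ (∀ x, e x (m + 1) = ι (i n) (F x)) ∧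
      ∀ x, trunc m (e x) ∈ C n → F x = ρ n (trunc m (e x)) := by
  let _ := metrizableSpaceMetric X
  obtain ⟨e₀, he₀⟩ := Metric.PiNatEmbed.exists_embedding_to_hilbert_cube (X := X)
  have hstep : ∀ (n : ℕ) (h : C(X, ℕ → HilbertCube)), ∃ F : X → K, Continuous F ∧
      (∀ x, F x ∈ M (i n)) ∧ ∀ x, h x ∈ C n → F x = ρ n (h x) := by
    intro n h
    obtain ⟨F, hF, hFe, hFM⟩ := hAE (i n) (h ⁻¹' C n) (fun x => ρ n (h x))
      ((hC n).preimage h.continuous)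
      ((hρ n).comp h.continuous.continuousOn fun x hx => hx) fun x hx => hρM n hx
    exact ⟨F, hF, hFM, fun x hx => hFe hx⟩
  choose F hF hFM hFρ using hstep
  -- the maps `h m`, which use only the coordinates up to `m`
  let h : ℕ → C(X, ℕ → HilbertCube) := fun m => Nat.rec
    (⟨fun x => Function.update (0 : ℕ → HilbertCube) 0 (e₀ x), continuous_const.update 0 he₀.continuous⟩)
    (fun m g => ⟨fun x => Function.update (g x) (m + 1) (ι (i m.unpair.1) (F m.unpair.1 g x)),
      g.continuous.update (m + 1) ((hι _).comp_continuous (hF _ g) (hFM _ g))⟩) m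
  have hsucc : ∀ m x, h (m + 1) x =
      Function.update (h m x) (m + 1) (ι (i m.unpair.1) (F m.unpair.1 (h m) x)) :=
    fun m x => rfl
  have hzero : ∀ x, h 0 x = Function.update (0 : ℕ → HilbertCube) 0 (e₀ x) := fun x => rfl
  have hbig : ∀ m x k, m < k → h m x k = 0 := by
    intro m x
    induction m with
    | zero => intro k hk; rw [hzero, Function.update_of_ne (by omega)]; rfl
    | succ m ih => intro k hk; rw [hsucc, Function.update_of_ne (by omega), ih k (by omega)]
  have hsmall : ∀ k x m, k ≤ m → h m x k = h k x k := by
    intro k x m hm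
    induction m, hm using Nat.le_induction with
    | base => rfl
    | succ m hm ih => rw [hsucc, Function.update_of_ne (by omega), ih]
  have htr : ∀ m x, trunc m (fun k => h k x k) = h m x := by
    intro m x
    funext k
    by_cases hk : k ≤ m
    · simp only [trunc, hk, if_true, hsmall k x m hk]
    · simp only [trunc, hk, if_false, hbig m x k (by omega)]
  have hec : Continuous fun x k => h k x k :=
    continuous_pi fun k => (continuous_apply k).comp (h k).continuous
  refine ⟨fun x k => h k x k, ?_, ?_⟩
  · refine IsEmbedding.of_comp hec (continuous_apply 0) ?_
    have : (Function.eval 0 ∘ fun x k => h k x k) = e₀ := by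
      funext x
      simp [hzero]
    exact this ▸ he₀
  · intro n m₀
    refine ⟨Nat.pair n m₀, Nat.right_le_pair n m₀, F n (h (Nat.pair n m₀)), hFM n _, ?_, ?_⟩
    · intro x
      change h (Nat.pair n m₀ + 1) x (Nat.pair n m₀ + 1) = _
      rw [hsucc, Function.update_self, Nat.unpair_pair]
    · intro x hx
      rw [htr] at hx ⊢
      exact hFρ n _ x hx

/-- A compact Euclidean neighbourhood retract `M` is an absolute extensor of the closure of
`range e`, provided the coordinates of `e` record extensions of `r ∘ q k ∘ trunc m` for a dense
sequence `q k` of maps. A map `f` into `M` is approximated by some `r ∘ q k ∘ trunc m`. The recorded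
extension of that approximation is a coordinate function, hence makes sense on the closure, and it
is close to `f` on `A`. Since `M` is a neighbourhood retract, it can be corrected to an extension of
`f`. -/
theorem isAESet_closure_range {X K : Type} [TopologicalSpace K] [T2Space K]
    {M : Set K} (hM : IsCompact M) {E : Type} [NormedAddCommGroup E] [NormedSpace ℝ E]
    [FiniteDimensional ℝ E] {j : K → E} {U : Set E} {r : E → K} (hj : ContinuousOn j M)
    (hU : IsOpen U) (hr : ContinuousOn r U) (hrM : MapsTo r U M)
    (hrj : ∀ m ∈ M, r (j m) = m) {ε : ℝ} (hε : 0 < ε) (hεU : cthickening ε (j '' M) ⊆ U)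
    {ι : K → HilbertCube} (hι : ContinuousOn ι M) (hιinj : InjOn ι M)
    {q : ℕ → C(ℕ → HilbertCube, E)} (hq : DenseRange q) {e : X → ℕ → HilbertCube}
    (he : ∀ k m₀, ∃ m, m₀ ≤ m ∧ ∃ F : X → K, (∀ x, F x ∈ M) ∧ (∀ x, e x (m + 1) = ι (F x)) ∧
      ∀ x, q k (trunc m (e x)) ∈ cthickening ε (j '' M) → F x = r (q k (trunc m (e x)))) :
    IsAESet (closure (range e)) M := by
  intro A f hA hf hfM
  have hjM : IsCompact (j '' M) := hM.image_of_continuousOn hj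
  have hthU : thickening ε (j '' M) ⊆ U := (thickening_subset_cthickening _ _).trans hεU
  have hjMU : j '' M ⊆ U := (self_subset_thickening hε _).trans hthU
  -- the extension of `j ∘ f` to a map into `E`
  obtain ⟨g, hg⟩ : ∃ g : C(ℕ → HilbertCube, E), ∀ y ∈ A, g y = j (f y) := by
    have hcl : IsClosedEmbedding fun y : A => ((y : closure (range e)) : ℕ → HilbertCube) :=
      isClosed_closure.isClosedEmbedding_subtypeVal.comp hA.isClosedEmbedding_subtypeVal
    obtain ⟨g, hg⟩ := ContinuousMap.exists_extension hcl
      (⟨A.domRestrict fun y => j (f y), continuousOn_iff_continuous_domRestrict.1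
        (hj.comp hf hfM)⟩ : C(A, E))
    exact ⟨g, fun y hy => congrArg (fun h : C(A, E) => h ⟨y, hy⟩) hg⟩
  -- the modulus of continuity of `j ∘ r` at the points of `j '' M`
  obtain ⟨η, hη, hηjr⟩ : ∃ η > 0, ∀ a ∈ j '' M, ∀ u, dist a u < η → dist (j (r a)) (j (r u)) < ε := by
    have h1 : ∀ a ∈ j '' M, ContinuousAt (fun u => j (r u)) a := fun a ha =>
      (hj.comp hr hrM).continuousAt (hU.mem_nhds (hjMU ha))
    obtain ⟨η, hη, h2⟩ := Metric.mem_uniformity_dist.1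
      (hjM.uniformContinuousAt_of_continuousAt _ h1 (dist_mem_uniformity hε))
    exact ⟨η, hη, fun a ha u hau => h2 hau ha⟩
  obtain ⟨κ, hκ, hκη, hκε⟩ : ∃ κ : ℝ, 0 < κ ∧ 2 * κ ≤ η ∧ 2 * κ ≤ ε :=
    ⟨min (η / 2) (ε / 2), lt_min (by linarith) (by linarith),
      by linarith [min_le_left (η / 2) (ε / 2)], by linarith [min_le_right (η / 2) (ε / 2)]⟩
  obtain ⟨k, hk⟩ := hq.exists_dist_lt g hκ
  obtain ⟨m₀, hm₀⟩ := eventually_dist_trunc_lt g.continuous hκ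
  obtain ⟨m, hm, F, hFM, hFe, hFq⟩ := he k m₀
  have hclose : ∀ z, dist (g z) (q k (trunc m z)) < 2 * κ := by
    intro z
    have h1 := hm₀ m hm z
    have h2 : dist (g (trunc m z)) (q k (trunc m z)) < κ :=
      (ContinuousMap.dist_apply_le_dist _).trans_lt hk
    have h3 := dist_triangle (g z) (g (trunc m z)) (q k (trunc m z))
    rw [dist_comm (g z) (g (trunc m z))] at h3
    linarith
  -- the recorded extension, as a map on the closure
  have hιM : IsCompact (ι '' M) := hM.image_of_continuousOn hι
  have hrec : ∀ y : closure (range e), (y : ℕ → HilbertCube) (m + 1) ∈ ι '' M := by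
    intro y
    have h1 : closure (range e) ⊆ (fun z : ℕ → HilbertCube => z (m + 1)) ⁻¹' (ι '' M) := by
      refine closure_minimal ?_ (hιM.isClosed.preimage (continuous_apply _))
      rintro _ ⟨x, rfl⟩
      exact ⟨F x, hFM x, (hFe x).symm⟩
    exact h1 y.2
  have hne : Nonempty (closure (range e)) → Nonempty K := fun ⟨y⟩ => by
    obtain ⟨b, -, -⟩ := hrec y
    exact ⟨b⟩
  rcases isEmpty_or_nonempty (closure (range e)) with hempty | hnonempty
  · exact ⟨f, continuous_of_discreteTopology, fun _ _ => rfl, fun x => hempty.elim x⟩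
  have hKne := hne hnonempty
  set s : HilbertCube → K := Function.invFunOn ι M with hs
  have hsι : ∀ b ∈ M, s (ι b) = b := fun b hb => hιinj.leftInvOn_invFunOn hb
  have hsc : ContinuousOn s (ι '' M) :=
    continuousOn_image_of_isCompact hM hι (continuousOn_id.congr hsι)
  set F' : closure (range e) → K := fun y => s ((y : ℕ → HilbertCube) (m + 1)) with hF'
  have hF'c : Continuous F' :=
    hsc.comp_continuous ((continuous_apply (m + 1)).comp continuous_subtype_val) hrec
  have hF'M : ∀ y, F' y ∈ M := by
    intro y
    obtain ⟨b, hb, hby⟩ := hrec y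
    simp only [hF', ← hby, hsι b hb, hb]
  set O : Set (closure (range e)) :=
    {y | q k (trunc m (y : ℕ → HilbertCube)) ∈ thickening ε (j '' M)} with hO
  have hqc : Continuous fun y : closure (range e) => q k (trunc m (y : ℕ → HilbertCube)) :=
    (q k).continuous.comp ((continuous_trunc m).comp continuous_subtype_val)
  have hOo : IsOpen O := isOpen_thickening.preimage hqc
  have hF'O : EqOn F' (fun y => r (q k (trunc m (y : ℕ → HilbertCube)))) O := by
    set D : Set (closure (range e)) := {y | (y : ℕ → HilbertCube) ∈ range e} with hD
    have hDd : Dense D := by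
      intro y
      rw [closure_subtype]
      refine closure_mono ?_ y.2
      rintro z hz
      exact ⟨⟨z, subset_closure hz⟩, hz, rfl⟩
    refine EqOn.of_subset_closure (s := O ∩ D) ?_ hF'c.continuousOn
      (hr.comp hqc.continuousOn fun y hy => hthU hy) inter_subset_left
      (hDd.open_subset_closure_inter hOo)
    rintro y ⟨hyO, x, hx⟩
    have h1 : F' y = F x := by simp only [hF', ← hx, hFe, hsι _ (hFM x)]
    rw [h1]
    simp only [hO, mem_ofPred_eq, ← hx] at hyO ⊢
    exact hFq x (thickening_subset_cthickening _ _ hyO)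
  have hAclose : ∀ y ∈ A, dist (g y) (j (F' y)) < ε := by
    intro y hy
    have h0 : j (f y) ∈ j '' M := ⟨_, hfM hy, rfl⟩
    have h1 := hclose y
    rw [hg y hy] at h1 ⊢
    have h2 : y ∈ O := mem_thickening_iff.2 ⟨_, h0, by rw [dist_comm]; linarith⟩
    have h3 := hηjr _ h0 _ (lt_of_lt_of_le h1 hκη)
    rw [hrj _ (hfM hy)] at h3
    rw [hF'O h2]
    exact h3
  -- deform the recorded extension to an exact one
  have hgc : Continuous fun y : closure (range e) => g (y : ℕ → HilbertCube) :=
    g.continuous.comp continuous_subtype_val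
  have hjF' : Continuous fun y => j (F' y) := hj.comp_continuous hF'c hF'M
  have hO' : IsClosed {y : closure (range e) | ε ≤ dist (g y) (j (F' y))} :=
    isClosed_le continuous_const (hgc.dist hjF')
  obtain ⟨l, hl0, hl1, hl01⟩ := exists_continuous_zero_one_of_isClosed hO' hA
    (disjoint_left.2 fun y hy hyA => absurd (hAclose y hyA) (not_lt.2 hy))
  have hψ : ∀ y : closure (range e), j (F' y) + l y • (g y - j (F' y)) ∈ U := by
    intro y
    apply hthU
    refine mem_thickening_iff.2 ⟨j (F' y), ⟨_, hF'M y, rfl⟩, ?_⟩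
    rw [dist_eq_norm, add_sub_cancel_left, norm_smul, Real.norm_of_nonneg (hl01 y).1]
    by_cases hy : ε ≤ dist (g y) (j (F' y))
    · have : l y = 0 := hl0 hy
      rw [this]; simpa using hε
    · rw [not_le, dist_eq_norm] at hy
      exact lt_of_le_of_lt (mul_le_of_le_one_left (norm_nonneg _) (hl01 y).2) hy
  refine ⟨fun y => r (j (F' y) + l y • (g y - j (F' y))), ?_, fun y hy => ?_, fun y => hrM (hψ y)⟩
  · exact hr.comp_continuous (hjF'.add (l.continuous.smul (hgc.sub hjF'))) hψ
  · have : l y = 1 := hl1 hy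
    simp only [this, one_smul, add_sub_cancel, hg y hy, hrj _ (hfM hy)]

/-- A separable metrizable space `X` with `M i ∈ AE(X)` for countably many compact neighbourhood
retracts `M i` has a metrizable compactification with the same property. -/
theorem exists_compactification {X K : Type} [TopologicalSpace X] [SeparableSpace X]
    [MetrizableSpace X] [TopologicalSpace K] [T2Space K] (M : ℕ → Set K)
    (hMc : ∀ i, IsCompact (M i)) (hret : ∀ i, IsEuclideanRetract (M i))
    (hAE : ∀ i, IsAESet X (M i)) :
    ∃ (X' : Type) (_ : TopologicalSpace X') (_ : CompactSpace X') (_ : MetrizableSpace X')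
      (e : X → X'), IsEmbedding e ∧ DenseRange e ∧ ∀ i, IsAESet X' (M i) := by
  choose E iE1 iE2 iE3 j U r hj hU hjU hr hrM hrj using hret
  have hjinj : ∀ i, InjOn (j i) (M i) := fun i a ha b hb hab => by
    rw [← hrj i a ha, hab, hrj i b hb]
  have hε : ∀ i, ∃ ε : ℝ, 0 < ε ∧ cthickening ε (j i '' M i) ⊆ U i := fun i =>
    ((hMc i).image_of_continuousOn (hj i)).exists_cthickening_subset_open (hU i)
      (mapsTo_iff_image_subset.1 (hjU i))
  choose ε hε hεU using hε
  have hcube : ∀ i, ∃ G : E i → HilbertCube, IsEmbedding G := fun i =>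
    Metric.PiNatEmbed.exists_embedding_to_hilbert_cube
  choose G hG using hcube
  set q : ∀ i, ℕ → C(ℕ → HilbertCube, E i) := fun i => denseSeq C(ℕ → HilbertCube, E i) with hq
  set C : ℕ → Set (ℕ → HilbertCube) := fun n =>
    q n.unpair.1 n.unpair.2 ⁻¹' cthickening (ε n.unpair.1) (j n.unpair.1 '' M n.unpair.1) with hC
  have hι : ∀ i, ContinuousOn (fun b => G i (j i b)) (M i) := fun i =>
    (hG i).continuous.comp_continuousOn (hj i)
  obtain ⟨e, he, hrec⟩ := exists_embedding_recording (X := X) M hAE (fun i b => G i (j i b)) hι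
    (fun n => n.unpair.1) C (fun n => isClosed_cthickening.preimage (ContinuousMap.continuous _))
    (fun n z => r n.unpair.1 (q n.unpair.1 n.unpair.2 z))
    (fun n => (hr n.unpair.1).comp (ContinuousMap.continuous _).continuousOn
      fun z hz => hεU _ hz)
    (fun n z hz => hrM _ (hεU _ hz))
  refine ⟨closure (range e), inferInstance, isCompact_iff_compactSpace.1 isClosed_closure.isCompact,
    inferInstance, fun x => ⟨e x, subset_closure ⟨x, rfl⟩⟩, ?_, ?_, ?_⟩
  · exact IsEmbedding.of_comp (he.continuous.subtype_mk _) continuous_subtype_val he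
  · intro y
    rw [closure_subtype]
    refine closure_mono ?_ y.2
    rintro _ ⟨x, rfl⟩
    exact ⟨_, ⟨x, rfl⟩, rfl⟩
  · intro i
    refine isAESet_closure_range (hMc i) (hj i) (hU i) (hr i) (hrM i) (hrj i) (hε i) (hεU i)
      (hι i) ((hG i).injective.comp_injOn (hjinj i)) (denseRange_denseSeq C(ℕ → HilbertCube, E i))
      fun k m₀ => ?_
    obtain ⟨n, hn1, hn2⟩ : ∃ n : ℕ, n.unpair.1 = i ∧ n.unpair.2 = k := ⟨Nat.pair i k, by simp⟩
    subst hn1 hn2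
    exact hrec n m₀

/-! ### Cells of a CW complex and of the sphere -/

/-- The passage from characteristic maps on the disk to those on `ℝ^d`: compose with the radial
retraction. -/
theorem attachesCell_of_disk {K : Type} [TopologicalSpace K] {d : ℕ} {A : Set K}
    (ψ : C(Disk d, K)) (hmem : ∀ y : Disk d, ‖(y : EuclideanSpace ℝ (Fin d))‖ = 1 → ψ y ∈ A)
    (hnotMem : ∀ y : Disk d, ‖(y : EuclideanSpace ℝ (Fin d))‖ < 1 → ψ y ∉ A)
    (hinj : ∀ y z : Disk d, ‖(y : EuclideanSpace ℝ (Fin d))‖ < 1 →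
      ‖(z : EuclideanSpace ℝ (Fin d))‖ < 1 → ψ y = ψ z → y = z) :
    AttachesCell d A (A ∪ range ψ) := by
  have hst : ∀ y : EuclideanSpace ℝ (Fin d), stretch 0 y ∈ closedBall (0 : EuclideanSpace ℝ (Fin d)) 1 :=
    fun y => by simpa using norm_stretch_le (by norm_num) y
  have hcont : Continuous fun y : EuclideanSpace ℝ (Fin d) => stretch 0 y :=
    continuousOn_stretch.comp_continuous (f := fun y => (y, (0 : ℝ))) (by fun_prop)
      fun y => ⟨mem_univ _, by norm_num⟩
  have hof : ∀ y : Disk d, (⟨stretch 0 (y : EuclideanSpace ℝ (Fin d)), hst y⟩ : Disk d) = y :=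
    fun y => Subtype.ext (stretch_zero_of_norm_le (mem_closedBall_zero_iff.1 y.2))
  refine ⟨fun y => ψ ⟨stretch 0 y, hst y⟩, ⟨?_, ?_, ?_, ?_, ?_⟩, ?_⟩
  · exact ψ.continuous.comp (hcont.subtype_mk _)
  · intro y hy
    refine hmem _ ?_
    change ‖stretch 0 y‖ = 1
    rw [← stretch_eq_stretch_zero zero_le_one hy]
    exact norm_stretch_eq_one (by linarith)
  · intro y hy
    refine hnotMem _ ?_
    change ‖stretch 0 y‖ < 1
    rwa [stretch_zero_of_norm_le hy.le]
  · intro y hy z hz hyz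
    rw [mem_ball_zero_iff] at hy hz
    have := hinj ⟨stretch 0 y, hst y⟩ ⟨stretch 0 z, hst z⟩ 
      (show ‖stretch 0 y‖ < 1 by rwa [stretch_zero_of_norm_le hy.le])
      (show ‖stretch 0 z‖ < 1 by rwa [stretch_zero_of_norm_le hz.le]) hyz
    have h2 := congrArg Subtype.val this
    simpa only [stretch_zero_of_norm_le hy.le, stretch_zero_of_norm_le hz.le] using h2
  · intro y
    simp only [stretch_zero_of_norm_le (norm_stretch_le (show (0 : ℝ) ≤ 1 by norm_num) y)]
  · congr 1
    ext b
    constructor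
    · rintro ⟨y, rfl⟩
      exact ⟨y, congrArg ψ (hof y)⟩
    · rintro ⟨y, rfl⟩
      exact ⟨_, rfl⟩

/-- The 2-sphere is a quotient of the disk: the map sends concentric circles to the parallels
with respect to the pole `v`, and the boundary to `v`. -/
theorem exists_disk_to_sphere (v : Sphere 2) : ∃ c : C(Disk 2, Sphere 2),
    (∀ y : Disk 2, ‖(y : EuclideanSpace ℝ (Fin 2))‖ = 1 → c y = v) ∧
    (∀ y : Disk 2, ‖(y : EuclideanSpace ℝ (Fin 2))‖ < 1 → c y ≠ v) ∧
    (∀ y z : Disk 2, ‖(y : EuclideanSpace ℝ (Fin 2))‖ < 1 →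
      ‖(z : EuclideanSpace ℝ (Fin 2))‖ < 1 → c y = c z → y = z) ∧
    Function.Surjective c := by
  obtain ⟨v, hv⟩ := v
  have hv1 : ‖v‖ = 1 := by simpa using hv
  have hv0 : v ≠ 0 := fun h => by simp [h] at hv1
  have hvv : inner ℝ v v = 1 := by rw [real_inner_self_eq_norm_sq, hv1]; norm_num
  have : Fact (Module.finrank ℝ (EuclideanSpace ℝ (Fin (2 + 1))) = 2 + 1) := ⟨by simp⟩
  let b := OrthonormalBasis.fromOrthogonalSpanSingleton (𝕜 := ℝ) 2 hv0
  set ι : EuclideanSpace ℝ (Fin 2) → EuclideanSpace ℝ (Fin (2 + 1)) :=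
    fun y => (b.repr.symm y : EuclideanSpace ℝ (Fin (2 + 1))) with hι
  have hιc : Continuous ι := continuous_subtype_val.comp b.repr.symm.continuous
  have hιn : ∀ y, ‖ι y‖ = ‖y‖ := fun y => by
    rw [hι]; exact (Submodule.coe_norm _).symm.trans (b.repr.symm.norm_map y)
  have hιinj : Function.Injective ι := Subtype.val_injective.comp b.repr.symm.injective
  have hιv : ∀ y, inner ℝ v (ι y) = 0 := fun y =>
    Submodule.mem_orthogonal_singleton_iff_inner_right.1 (b.repr.symm y).2
  have hιsurj : ∀ x, inner ℝ v x = 0 → ∃ y, ι y = x := fun x hx =>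
    ⟨b.repr ⟨x, Submodule.mem_orthogonal_singleton_iff_inner_right.2 hx⟩, by simp [hι]⟩
  have hιsmul : ∀ (t : ℝ) y, ι (t • y) = t • ι y := fun t y => by simp [hι]
  set c : EuclideanSpace ℝ (Fin 2) → EuclideanSpace ℝ (Fin (2 + 1)) := fun y =>
    (2 * √(1 - ‖y‖ ^ 2)) • ι y + (2 * ‖y‖ ^ 2 - 1) • v with hc
  have hcc : Continuous c := by
    have h1 : Continuous fun y : EuclideanSpace ℝ (Fin 2) => 2 * √(1 - ‖y‖ ^ 2) := by fun_prop
    have h2 : Continuous fun y : EuclideanSpace ℝ (Fin 2) => 2 * ‖y‖ ^ 2 - 1 := by fun_prop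
    exact (h1.smul hιc).add (h2.smul continuous_const)
  have hcv : ∀ y, inner ℝ v (c y) = 2 * ‖y‖ ^ 2 - 1 := fun y => by
    simp only [hc, inner_add_right, real_inner_smul_right, hιv, hvv]; ring
  have hcn : ∀ y, ‖y‖ ≤ 1 → ‖c y‖ = 1 := by
    intro y hy
    have h1 : 0 ≤ 1 - ‖y‖ ^ 2 := by nlinarith [norm_nonneg y]
    have h2 : inner ℝ ((2 * √(1 - ‖y‖ ^ 2)) • ι y) ((2 * ‖y‖ ^ 2 - 1) • v) = 0 := by
      rw [real_inner_smul_left, real_inner_smul_right, real_inner_comm, hιv]; ring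
    have h3 := norm_add_sq_eq_norm_sq_add_norm_sq_real h2
    have h4 := Real.sq_sqrt h1
    rw [norm_smul, norm_smul, hιn, hv1, Real.norm_eq_abs, Real.norm_eq_abs] at h3
    have h5 : ‖c y‖ * ‖c y‖ = 1 := by
      rw [h3, mul_one, abs_mul_abs_self, mul_mul_mul_comm, abs_mul_abs_self]
      nlinarith
    nlinarith [norm_nonneg (c y)]
  have hcs : ∀ y : Disk 2, c y ∈ sphere (0 : EuclideanSpace ℝ (Fin (2 + 1))) 1 := fun y =>
    mem_sphere_zero_iff_norm.2 (hcn y (mem_closedBall_zero_iff.1 y.2))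
  refine ⟨⟨fun y => ⟨c y, hcs y⟩, (hcc.comp continuous_subtype_val).subtype_mk hcs⟩, ?_, ?_, ?_, ?_⟩
  · intro y hy
    refine Subtype.ext ?_
    simp [hc, hy]
    norm_num
  · intro y hy hyv
    have h1 : c y = v := congrArg Subtype.val hyv
    have h2 := hcv y
    rw [h1, hvv] at h2
    nlinarith [norm_nonneg (y : EuclideanSpace ℝ (Fin 2))]
  · intro y z hy hz hyz
    have h1 : c y = c z := congrArg Subtype.val hyz
    have h2 : ‖(y : EuclideanSpace ℝ (Fin 2))‖ ^ 2 = ‖(z : EuclideanSpace ℝ (Fin 2))‖ ^ 2 := by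
      have := hcv y
      rw [h1, hcv z] at this
      linarith
    have h3 : 0 < 2 * √(1 - ‖(z : EuclideanSpace ℝ (Fin 2))‖ ^ 2) := by
      have : 0 < 1 - ‖(z : EuclideanSpace ℝ (Fin 2))‖ ^ 2 := by
        nlinarith [norm_nonneg (z : EuclideanSpace ℝ (Fin 2))]
      positivity
    simp only [hc, h2, add_left_inj] at h1
    exact Subtype.ext (hιinj (smul_right_injective _ h3.ne' h1))
  · rintro ⟨x, hx⟩
    have hx1 : ‖x‖ = 1 := by simpa using hx
    have hxx : inner ℝ x x = 1 := by rw [real_inner_self_eq_norm_sq, hx1]; norm_num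
    set t : ℝ := inner ℝ v x with ht
    have hsq : ‖x - t • v‖ ^ 2 = 1 - t ^ 2 := by
      rw [← real_inner_self_eq_norm_sq, inner_sub_left, inner_sub_right, inner_sub_right,
        real_inner_smul_left, real_inner_smul_left, real_inner_smul_right, real_inner_smul_right,
        real_inner_comm v x, hxx, hvv, ← ht]
      ring
    have ht1 : t ≤ 1 := by nlinarith [sq_nonneg ‖x - t • v‖]
    rcases ht1.eq_or_lt with ht1 | ht1
    · have hxv : x = v := by
        rw [ht1] at hsq
        have : ‖x - (1 : ℝ) • v‖ = 0 := by nlinarith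
        rw [norm_eq_zero, one_smul, sub_eq_zero] at this
        exact this
      have hy1 : ‖EuclideanSpace.single (0 : Fin 2) (1 : ℝ)‖ = 1 := by simp
      refine ⟨⟨EuclideanSpace.single 0 1, by simp⟩, Subtype.ext ?_⟩
      simp [hc, hy1, hxv]
      norm_num
    · obtain ⟨y, hy⟩ := hιsurj (x - t • v) (by
        rw [inner_sub_right, real_inner_smul_right, hvv, ← ht]; ring)
      have htm : -1 ≤ t := by nlinarith [sq_nonneg ‖x - t • v‖]
      have hpos : 0 < 1 - (1 + t) / 2 := by linarith
      set a : ℝ := 2 * √(1 - (1 + t) / 2) with ha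
      have ha0 : 0 < a := by positivity
      have ha2 : a ^ 2 = 2 * (1 - t) := by
        rw [ha, mul_pow, Real.sq_sqrt hpos.le]; ring
      have hyn : ‖a⁻¹ • y‖ ^ 2 = (1 + t) / 2 := by
        rw [norm_smul, mul_pow, ← hιn y, hy, hsq, norm_inv, Real.norm_of_nonneg ha0.le, inv_pow, ha2]
        have : 1 - t ≠ 0 := by linarith
        field_simp
        ring
      refine ⟨⟨a⁻¹ • y, ?_⟩, Subtype.ext ?_⟩
      · rw [mem_closedBall_zero_iff]
        nlinarith [norm_nonneg (a⁻¹ • y)]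
      · change c (a⁻¹ • y) = x
        simp only [hc, hyn, ← ha]
        rw [hιsmul, smul_smul, mul_inv_cancel₀ ha0.ne', hy, one_smul,
          show 2 * ((1 + t) / 2) - 1 = t by ring]
        abel

/-- `B` is obtained from `A` by attaching finitely many cells of dimension at least `d`, one after
the other. -/
def Attaches {K : Type} [TopologicalSpace K] (d : ℕ) : Set K → Set K → Prop :=
  Relation.ReflTransGen fun A B => ∃ e, d ≤ e ∧ AttachesCell e A B

section attaches
variable {K : Type} [TopologicalSpace K] {d : ℕ} {A B : Set K}

theorem AttachesCell.subset (h : AttachesCell d A B) : A ⊆ B := by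
  obtain ⟨φ, -, rfl⟩ := h
  exact subset_union_left

theorem AttachesCell.isCompact (h : AttachesCell d A B) (hA : IsCompact A) : IsCompact B := by
  obtain ⟨φ, h, rfl⟩ := h
  exact hA.union h.isCompact_range

theorem Attaches.mono {e : ℕ} (hed : e ≤ d) (h : Attaches d A B) : Attaches e A B :=
  h.lift id fun _ _ ⟨k, hk, hk'⟩ => ⟨k, hed.trans hk, hk'⟩

theorem Attaches.subset (h : Attaches d A B) : A ⊆ B := by
  induction h with
  | refl => exact Subset.rfl
  | tail _ h ih =>
    obtain ⟨e, -, h⟩ := h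
    exact ih.trans h.subset

theorem Attaches.isCompact (h : Attaches d A B) (hA : IsCompact A) : IsCompact B := by
  induction h with
  | refl => exact hA
  | tail _ h ih =>
    obtain ⟨e, -, h⟩ := h
    exact h.isCompact ih

theorem Attaches.isEuclideanRetract [T2Space K] (h : Attaches d A B) (hA : IsCompact A)
    (hret : IsEuclideanRetract A) : IsEuclideanRetract B := by
  induction h with
  | refl => exact hret
  | tail h' h ih =>
    obtain ⟨e, -, h⟩ := h
    exact ih.attachesCell (Attaches.isCompact h' hA) h

theorem Attaches.pushable [T2Space K] {X : Type} [TopologicalSpace X] [NormalSpace X]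
    (hX : NonvanishingExtension X d) (h : Attaches d A B) (hA : IsCompact A) :
    Pushable X A B := by
  induction h with
  | refl => exact Pushable.refl X A
  | tail h' h ih =>
    obtain ⟨e, he, h⟩ := h
    exact Pushable.trans (Attaches.subset h') h.subset ih
      (pushable_of_attachesCell (hX.of_le he) (Attaches.isCompact h' hA).isClosed h)

end attaches

section cw
variable {L : Type} [TopologicalSpace L] (cw : CWStructure.{0, 0} L)

/-- The open cell of dimension `k` with index `i`. -/
def openCell (k : ℕ) (i : cw.cell k) : Set L :=
  cw.attach k i '' {y : Disk k | ‖(y : EuclideanSpace ℝ (Fin k))‖ < 1}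

/-- The union of the open cells of dimension less than `m`, that is, the `(m-1)`-skeleton. -/
def skel (m : ℕ) : Set L := {x | ∃ k < m, ∃ i, x ∈ openCell cw k i}

theorem skel_mono : Monotone (skel cw) := by
  rintro m n hmn x ⟨k, hk, hx⟩
  exact ⟨k, hk.trans_le hmn, hx⟩

theorem eq_of_mem_openCell {k m : ℕ} {i : cw.cell k} {j : cw.cell m} {x : L}
    (hi : x ∈ openCell cw k i) (hj : x ∈ openCell cw m j) :
    (⟨k, i⟩ : Σ k, cw.cell k) = ⟨m, j⟩ := by
  by_contra hne
  exact disjoint_left.1 (cw.pairwiseDisjoint k i m j hne) hi hj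

theorem notMem_skel {m : ℕ} {i : cw.cell m} {x : L} (hi : x ∈ openCell cw m i) :
    x ∉ skel cw m := by
  rintro ⟨k, hk, j, hj⟩
  exact hk.ne (congrArg Sigma.fst (eq_of_mem_openCell cw hj hi))

theorem attach_mem_skel {m : ℕ} (i : cw.cell m) {y : Disk m}
    (hy : ‖(y : EuclideanSpace ℝ (Fin m))‖ = 1) : cw.attach m i y ∈ skel cw m := by
  obtain ⟨S, hS, hS'⟩ := cw.closureFiniteness m i
  have := hS' ⟨y, hy, rfl⟩
  simp only [mem_iUnion] at this
  obtain ⟨j, hj, hy⟩ := this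
  exact ⟨j.1, hS j hj, j.2, hy⟩

theorem attach_mem {m : ℕ} (i : cw.cell m) (y : Disk m) :
    cw.attach m i y ∈ skel cw m ∨ cw.attach m i y ∈ openCell cw m i := by
  rcases (mem_closedBall_zero_iff.1 y.2).lt_or_eq with h | h
  · exact Or.inr ⟨y, h, rfl⟩
  · exact Or.inl (attach_mem_skel cw i h)

theorem skel_succ (m : ℕ) : skel cw (m + 1) = skel cw m ∪ ⋃ i, openCell cw m i := by
  ext x
  simp only [mem_union, mem_iUnion]
  constructor
  · rintro ⟨k, hk, i, hi⟩
    rcases (Nat.lt_succ_iff.1 hk).lt_or_eq with h | rfl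
    · exact Or.inl ⟨k, h, i, hi⟩
    · exact Or.inr ⟨i, hi⟩
  · rintro (h | ⟨i, hi⟩)
    · exact skel_mono cw m.le_succ h
    · exact ⟨m, m.lt_succ_self, i, hi⟩

/-- The next skeleton arises by attaching finitely many cells; here the complex `L` sits inside
`K`, together with another subset `S` that is disjoint from the new cells. -/
theorem attaches_skel {K : Type} [TopologicalSpace K] {g : L → K} (hg : Continuous g)
    (hinj : Function.Injective g) {m : ℕ} [Finite (cw.cell m)] {S : Set K}
    (hS : ∀ i, Disjoint (g '' openCell cw m i) S) :
    Attaches m (g '' skel cw m ∪ S) (g '' skel cw (m + 1) ∪ S) := by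
  classical
  have := Fintype.ofFinite (cw.cell m)
  have key : ∀ s : Finset (cw.cell m), Attaches m (g '' skel cw m ∪ S)
      (g '' (skel cw m ∪ ⋃ i ∈ s, openCell cw m i) ∪ S) := by
    intro s
    induction s using Finset.induction_on with
    | empty =>
      simp only [Finset.notMem_empty, iUnion_of_empty, iUnion_empty, union_empty]
      exact Relation.ReflTransGen.refl
    | insert i s his ih =>
      refine Relation.ReflTransGen.tail ih ⟨m, le_rfl, ?_⟩
      have hcell := attachesCell_of_disk
        (A := g '' (skel cw m ∪ ⋃ i ∈ s, openCell cw m i) ∪ S)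
        ((⟨g, hg⟩ : C(L, K)).comp (cw.attach m i)) (fun y hy => ?_) (fun y hy => ?_)
        (fun y z hy hz hyz => ?_)
      · convert hcell using 1
        ext b
        simp only [mem_union, mem_image, mem_range, mem_iUnion, Finset.mem_insert,
          ContinuousMap.comp_apply, ContinuousMap.coe_mk]
        constructor
        · rintro (⟨x, hx | ⟨j, rfl | hj, hx⟩, rfl⟩ | hb)
          · exact Or.inl (Or.inl ⟨x, Or.inl hx, rfl⟩)
          · obtain ⟨y, -, rfl⟩ := hx
            exact Or.inr ⟨y, rfl⟩
          · exact Or.inl (Or.inl ⟨x, Or.inr ⟨j, hj, hx⟩, rfl⟩)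
          · exact Or.inl (Or.inr hb)
        · rintro ((⟨x, hx | ⟨j, hj, hx⟩, rfl⟩ | hb) | ⟨y, rfl⟩)
          · exact Or.inl ⟨x, Or.inl hx, rfl⟩
          · exact Or.inl ⟨x, Or.inr ⟨j, Or.inr hj, hx⟩, rfl⟩
          · exact Or.inr hb
          · exact Or.inl ⟨_, (attach_mem cw i y).imp_right fun h => ⟨i, Or.inl rfl, h⟩, rfl⟩
      · exact Or.inl ⟨_, Or.inl (attach_mem_skel cw i hy), rfl⟩
      · have hmem : cw.attach m i y ∈ openCell cw m i := ⟨y, hy, rfl⟩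
        rintro (⟨x, hx, hxy⟩ | hb)
        · obtain rfl := hinj hxy
          rcases hx with hx | hx
          · exact notMem_skel cw hmem hx
          · simp only [mem_iUnion] at hx
            obtain ⟨j, hj, hx⟩ := hx
            have := eq_of_mem_openCell cw hmem hx
            simp only [Sigma.mk.injEq, heq_eq_eq, true_and] at this
            exact his (this ▸ hj)
        · exact disjoint_left.1 (hS i) ⟨_, hmem, rfl⟩ hb
      · have := (cw.isEmbedding_interior m i).injective (a₁ := ⟨y, hy⟩) (a₂ := ⟨z, hz⟩)
          (hinj hyz)
        exact congrArg Subtype.val this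
  simpa [skel_succ] using key Finset.univ

/-- Otherwise `C` would have points outside every skeleton, and these would form an infinite closed
discrete subset of `C`. -/
theorem exists_subset_skel [T2Space L] {C : Set L} (hC : IsCompact C) : ∃ n, C ⊆ skel cw n := by
  by_contra! hcon
  simp only [not_subset] at hcon
  choose l hlC hl using hcon
  have hclosed : ∀ D ⊆ range l, IsClosed D := by
    intro D hD
    refine cw.weakTopology D fun k i => ?_
    have heq : cw.attach k i ⁻¹' D = cw.attach k i ⁻¹' (D ∩ l '' Iio (k + 1)) := by
      ext y
      refine ⟨fun hy => ⟨hy, ?_⟩, fun hy => hy.1⟩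
      obtain ⟨n, hn⟩ := hD hy
      refine ⟨n, ?_, hn⟩
      by_contra! hnk
      simp only [mem_Iio, not_lt] at hnk
      refine hl n (skel_mono cw hnk ?_)
      rw [hn, skel_succ]
      exact (attach_mem cw i y).imp_right fun h => mem_iUnion.2 ⟨i, h⟩
    rw [heq]
    exact (((finite_Iio (k + 1)).image l).inter_of_right D).isClosed.preimage
      (cw.attach k i).continuous
  have hinf : (range l).Infinite := by
    intro hfin
    have h1 : ∀ x : L, ∃ n, x ∈ skel cw n := by
      intro x
      obtain ⟨n, i, y, hy, rfl⟩ := cw.covers x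
      exact ⟨n + 1, n, n.lt_succ_self, i, y, hy, rfl⟩
    choose q hq using h1
    obtain ⟨N, hN⟩ := (hfin.image q).bddAbove
    exact hl N (skel_mono cw (hN ⟨_, ⟨N, rfl⟩, rfl⟩) (hq (l N)))
  obtain ⟨x, -, hx⟩ := hinf.exists_accPt_of_subset_isCompact hC (range_subset_iff.2 hlC)
  rw [accPt_iff_nhds] at hx
  obtain ⟨y, ⟨hy1, hy2⟩, hyx⟩ := hx (range l \ {x})ᶜ
    ((hclosed _ sdiff_subset).isOpen_compl.mem_nhds (by simp))
  exact hy1 ⟨hy2, hyx⟩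

end cw

/-! ### Passing between the two formulations of extension properties -/

theorem isAESet_univ {X K : Type} [TopologicalSpace X] [TopologicalSpace K] (h : IsAE K X) :
    IsAESet X (univ : Set K) := by
  intro A f hA hf _
  obtain ⟨F, hF⟩ := h A hA ⟨A.domRestrict f, continuousOn_iff_continuous_domRestrict.1 hf⟩
  exact ⟨F, F.continuous, fun x hx => hF ⟨x, hx⟩, fun _ => mem_univ _⟩

/-- The image of a closed subset of a compact space is compact, hence lies in one `M n`. -/
theorem isAE_of_isAESet {X K : Type} [TopologicalSpace X] [CompactSpace X] [TopologicalSpace K]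
    [Nonempty K] (M : ℕ → Set K) (hcomp : ∀ C : Set K, IsCompact C → ∃ n, C ⊆ M n)
    (h : ∀ n, IsAESet X (M n)) : IsAE K X := by
  classical
  intro A hA f
  have : CompactSpace A := isCompact_iff_compactSpace.1 hA.isCompact
  obtain ⟨n, hn⟩ := hcomp (range f) (isCompact_range f.continuous)
  let f' : X → K := fun x => if hx : x ∈ A then f ⟨x, hx⟩ else Classical.arbitrary K
  have hf' : ∀ a : A, f' a = f a := fun a => by simp [f']
  obtain ⟨F, hF, hFf, -⟩ := h n A f' hA
    (continuousOn_iff_continuous_domRestrict.2 (f.continuous.congr fun a => (hf' a).symm))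
    (fun x hx => by rw [hf' ⟨x, hx⟩]; exact hn ⟨_, rfl⟩)
  exact ⟨⟨F, hF⟩, fun a => (hFf a.2).trans (hf' a)⟩

theorem isAE_of_retract {X K S : Type} [TopologicalSpace X] [TopologicalSpace K]
    [TopologicalSpace S] (ι : C(S, K)) (ρ : C(K, S)) (h : ∀ s, ρ (ι s) = s) (hK : IsAE K X) :
    IsAE S X := by
  intro A hA f
  obtain ⟨F, hF⟩ := hK A hA (ι.comp f)
  exact ⟨ρ.comp F, fun a => by simp [hF a, h]⟩

/-- Extend the direction of the vector field as a map to the sphere, and the logarithm of its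
length as a real function. -/
theorem nonvanishingExtension_of_isAE {X : Type} [TopologicalSpace X] [NormalSpace X]
    (h : IsAE (Sphere 2) X) : NonvanishingExtension X 3 := by
  intro A hA f hf hf0
  have hf' : ContinuousOn (fun x => WithLp.toLp 2 (f x)) A :=
    (PiLp.continuous_toLp 2 _).comp_continuousOn hf
  have hf0' : ∀ x ∈ A, ‖WithLp.toLp 2 (f x)‖ ≠ 0 := fun x hx h0 =>
    hf0 x hx (by simpa using h0)
  have hunit : ∀ a : A, ‖WithLp.toLp 2 (f a)‖⁻¹ • WithLp.toLp 2 (f a) ∈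
      sphere (0 : EuclideanSpace ℝ (Fin (2 + 1))) 1 := fun a => by
    rw [mem_sphere_zero_iff_norm, norm_smul, norm_inv, norm_norm, inv_mul_cancel₀ (hf0' a a.2)]
  have hcont : Continuous fun a : A => ‖WithLp.toLp 2 (f a)‖⁻¹ • WithLp.toLp 2 (f a) :=
    continuousOn_iff_continuous_domRestrict.1 ((hf'.norm.inv₀ hf0').smul hf')
  obtain ⟨F, hF⟩ := h A hA ⟨fun a => ⟨_, hunit a⟩, hcont.subtype_mk hunit⟩
  obtain ⟨l, hl, hlf⟩ := tietze hA (hf'.norm.log hf0')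
  refine ⟨fun x => Real.exp (l x) • WithLp.ofLp (F x : EuclideanSpace ℝ (Fin (2 + 1))),
    ?_, ?_, ?_⟩
  · exact (Real.continuous_exp.comp hl).smul
      ((PiLp.continuous_ofLp 2 _).comp (continuous_subtype_val.comp F.continuous))
  · intro x hx
    have hFx : ‖(F x : EuclideanSpace ℝ (Fin (2 + 1)))‖ = 1 := mem_sphere_zero_iff_norm.1 (F x).2
    rw [smul_eq_zero_iff_right (Real.exp_pos _).ne', WithLp.ofLp_eq_zero] at hx
    simp [hx] at hFx
  · intro x hx
    have h1 : (F x : EuclideanSpace ℝ (Fin (2 + 1))) =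
        ‖WithLp.toLp 2 (f x)‖⁻¹ • WithLp.toLp 2 (f x) := congrArg Subtype.val (hF ⟨x, hx⟩)
    have h2 : 0 < ‖WithLp.toLp 2 (f x)‖ := lt_of_le_of_ne (norm_nonneg _) (hf0' x hx).symm
    simp only [h1, hlf hx, Real.exp_log h2, WithLp.ofLp_smul, smul_smul, mul_inv_cancel₀ h2.ne',
      one_smul]

/-! ### The filtration of the wedge -/

/-- A wedge of a complex of finite type with a 2-sphere is exhausted by compact subcomplexes, each
arising from the first by attaching cells of dimension at least three. The first one contains the
sphere and the 2-skeleton of the complex, as well as the cell of the base point. -/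
theorem exists_filtration {L : Type} [TopologicalSpace L] [T2Space L] (cw : CWStructure.{0, 0} L)
    (hft : ∀ n, Finite (cw.cell n)) {K : Type} [TopologicalSpace K] [T2Space K]
    (hK : IsWedgeOf K L (Sphere 2)) :
    ∃ M : ℕ → Set K, IsCompact (M 0) ∧ IsEuclideanRetract (M 0) ∧
      (∀ n, Attaches 3 (M n) (M (n + 1))) ∧ ∀ C : Set K, IsCompact C → ∃ n, C ⊆ M n := by
  obtain ⟨L', S', hL', hS', hLS, ⟨p, hp⟩, ⟨eL⟩, ⟨eS⟩⟩ := hK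
  have : Nonempty K := ⟨p⟩
  have hpm : p ∈ L' ∩ S' := hp ▸ mem_singleton p
  have hpu : ∀ x, x ∈ L' → x ∈ S' → x = p := fun x h1 h2 => by
    have : x ∈ L' ∩ S' := ⟨h1, h2⟩
    rwa [hp] at this
  set g : L → K := fun x => eL.symm x with hg
  have hge : IsClosedEmbedding g :=
    hL'.isClosedEmbedding_subtypeVal.comp eL.symm.isClosedEmbedding
  have hgr : ∀ x, g x ∈ L' := fun x => (eL.symm x).2
  have hgL : ∀ b (hb : b ∈ L'), g (eL ⟨b, hb⟩) = b := fun b hb => by simp [hg]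
  obtain ⟨k, i, y, hy, hyp⟩ := cw.covers (eL ⟨p, hpm.1⟩)
  set x0 : L := eL ⟨p, hpm.1⟩ with hx0
  have hgx0 : g x0 = p := hgL p hpm.1
  have hx0k : x0 ∈ openCell cw k i := ⟨y, hy, hyp⟩
  have hemb : ∀ x, g x = p → x = x0 := fun x hx => hge.injective (hx.trans hgx0.symm)
  -- The base point may lie in an open cell of any dimension `k`. The filtration starts beyond it, so
  -- that all further cells are disjoint from the sphere.
  obtain ⟨N, hN2, hNk⟩ : ∃ N, 3 ≤ N ∧ k < N := ⟨k + 3, by omega, by omega⟩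
  have hx0N : x0 ∈ skel cw N := ⟨k, hNk, i, hx0k⟩
  have hskel : ∀ n, Attaches 0 (∅ : Set K) (g '' skel cw n) := by
    intro n
    induction n with
    | zero =>
      have : skel cw 0 = ∅ := by ext x; simp [skel]
      rw [this, image_empty]
      exact Relation.ReflTransGen.refl
    | succ n ih =>
      have := (attaches_skel cw hge.continuous hge.injective (m := n) (S := ∅)
        (fun i => disjoint_empty _)).mono (Nat.zero_le n)
      simp only [union_empty] at this
      exact ih.trans this
  have hsphere : Attaches 0 (g '' skel cw N) (g '' skel cw N ∪ S') := by
    obtain ⟨c, hc1, hc2, hc3, hc4⟩ := exists_disk_to_sphere (eS ⟨p, hpm.2⟩)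
    have hcell := attachesCell_of_disk (A := g '' skel cw N)
      ((⟨fun s => (eS.symm s : K), continuous_subtype_val.comp eS.symm.continuous⟩ :
        C(Sphere 2, K)).comp c) (fun y hy => ?_) (fun y hy => ?_) (fun y z hy hz hyz => ?_)
    · refine Relation.ReflTransGen.single ⟨2, Nat.zero_le _, ?_⟩
      convert hcell using 2
      ext b
      constructor
      · intro hb
        obtain ⟨y, hy⟩ := hc4 (eS ⟨b, hb⟩)
        exact ⟨y, by simp [hy]⟩
      · rintro ⟨y, rfl⟩
        exact (eS.symm (c y)).2
    · refine ⟨x0, hx0N, ?_⟩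
      simp [hc1 y hy, hgx0]
    · rintro ⟨x, -, hx⟩
      have h1 : (eS.symm (c y) : K) = p := by
        refine hpu _ ?_ (eS.symm (c y)).2
        have := hgr x
        rwa [hx] at this
      refine hc2 y hy ?_
      rw [← eS.apply_symm_apply (c y)]
      exact congrArg eS (Subtype.ext h1)
    · exact hc3 y z hy hz (eS.symm.injective (Subtype.ext hyz))
  have h0 : Attaches 0 (∅ : Set K) (g '' skel cw N ∪ S') := (hskel N).trans hsphere
  refine ⟨fun n => g '' skel cw (N + n) ∪ S', h0.isCompact isCompact_empty,
    h0.isEuclideanRetract isCompact_empty isEuclideanRetract_empty, fun n => ?_, fun C hC => ?_⟩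
  · refine (attaches_skel cw hge.continuous hge.injective (m := N + n) fun j => ?_).mono
      (by omega)
    rw [disjoint_left]
    rintro _ ⟨x, hx, rfl⟩ hxS
    have := hemb x (hpu _ (hgr x) hxS)
    subst this
    have := congrArg Sigma.fst (eq_of_mem_openCell cw hx0k hx)
    simp only at this
    omega
  · obtain ⟨n, hn⟩ := exists_subset_skel cw (hge.isCompact_preimage hC)
    refine ⟨n, fun b hb => ?_⟩
    have hbu : b ∈ L' ∪ S' := hLS ▸ mem_univ b
    refine hbu.imp (fun hbL => ⟨eL ⟨b, hbL⟩, skel_mono cw (Nat.le_add_left n N) (hn ?_),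
      hgL b hbL⟩) id
    rw [mem_preimage, hgL]
    exact hb

/-- Collapsing `L` to the base point is a retraction of the wedge onto the sphere. -/
theorem isAE_sphere_of_isWedgeOf {L K X : Type} [TopologicalSpace L] [TopologicalSpace K]
    [TopologicalSpace X] (hK : IsWedgeOf K L (Sphere 2)) (hX : IsAE K X) :
    IsAE (Sphere 2) X := by
  classical
  obtain ⟨L', S', hL', hS', hLS, ⟨p, hp⟩, -, ⟨eS⟩⟩ := hK
  have hpm : p ∈ L' ∩ S' := hp ▸ mem_singleton p
  let ρ : K → Sphere 2 := fun b => if hb : b ∈ S' then eS ⟨b, hb⟩ else eS ⟨p, hpm.2⟩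
  have hρS : ∀ b : S', ρ b = eS b := fun b => by simp [ρ]
  have hρL : ∀ b ∈ L', ρ b = eS ⟨p, hpm.2⟩ := fun b hb => by
    by_cases hbS : b ∈ S'
    · have : b ∈ L' ∩ S' := ⟨hb, hbS⟩
      rw [hp, mem_singleton_iff] at this
      subst this
      simp [ρ, hbS]
    · simp [ρ, hbS]
  have hρ : Continuous ρ := by
    refine continuous_of_isClosed_cover hL' hS' (fun x => (hLS ▸ mem_univ x : x ∈ L' ∪ S')) ?_ ?_
    · exact continuousOn_const.congr hρL
    · exact continuousOn_iff_continuous_domRestrict.2 (eS.continuous.congr fun b => (hρS b).symm)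
  exact isAE_of_retract ⟨fun s => (eS.symm s : K), continuous_subtype_val.comp eS.symm.continuous⟩
    ⟨ρ, hρ⟩ (fun s => (hρS _).trans (eS.apply_symm_apply s)) hX

end WedgeCompactification

open WedgeCompactification

/-- If `L` is a CW complex of finite type with finite fundamental group and
`K = L ∨ S²`, then every separable metrizable space `X` with `K ∈ AE(X)` admits a metrizable
compactification `X̃` with `K ∈ AE(X̃)`. -/
theorem compactification_exists_for_wedge_with_sphere_two
    (L : Type) [TopologicalSpace L] [T2Space L] (cwL : CWStructure.{0, 0} L)
    (hft : ∀ n, Finite (cwL.cell n))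
    (hπ : ∀ x : L, Finite (FundamentalGroup L x))
    (K : Type) [TopologicalSpace K] [T2Space K] (cwK : CWStructure.{0, 0} K)
    (hK : IsWedgeOf K L (Sphere 2)) :
    ∀ (X : Type) [TopologicalSpace X] [SeparableSpace X] [MetrizableSpace X],
      IsAE K X →
        ∃ (X' : Type) (_ : TopologicalSpace X') (_ : CompactSpace X') (_ : MetrizableSpace X')
          (e : X → X'), Topology.IsEmbedding e ∧ DenseRange e ∧ IsAE K X' := by
  intro X _ _ _ hX
  have hS : NonvanishingExtension X 3 :=
    nonvanishingExtension_of_isAE (isAE_sphere_of_isWedgeOf hK hX)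
  have : Nonempty K := by
    obtain ⟨-, -, -, -, -, ⟨p, -⟩, -, -⟩ := hK
    exact ⟨p⟩
  obtain ⟨M, hM0, hret0, hM, hcomp⟩ := exists_filtration cwL hft hK
  have hatt : ∀ m n, Attaches 3 (M m) (M (m + n)) := by
    intro m n
    induction n with
    | zero => exact Relation.ReflTransGen.refl
    | succ n ih => exact ih.trans (hM (m + n))
  have h0 : ∀ n, Attaches 3 (M 0) (M n) := fun n => by simpa using hatt 0 n
  have hMc : ∀ n, IsCompact (M n) := fun n => (h0 n).isCompact hM0
  have hmono : Monotone M := monotone_nat_of_le_succ fun n => (hM n).subset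
  have hAE : ∀ m, IsAESet X (M m) := fun m =>
    isAESet_of_pushable (fun n => M (m + n)) (fun a b hab => hmono (by omega))
      (fun C hC => (hcomp C hC).imp fun n hn => hn.trans (hmono (Nat.le_add_left n m)))
      (fun n => (hatt m n).pushable hS (hMc m)) (isAESet_univ hX)
  obtain ⟨X', i1, i2, i3, e, he, hde, hX'⟩ := exists_compactification M hMc
    (fun n => (h0 n).isEuclideanRetract hM0 hret0) hAE
  exact ⟨X', i1, i2, i3, e, he, hde, isAE_of_isAESet M hcomp hX'⟩
end

section
/- Let B be a compact Hausdorff space and let X ⊆ B be a dense subspace which, in the subspace topology, is separable and completely metrizable. Let (A, ≤) be a directed partially ordered set in which every countable subset has an upper bound, and for each α ∈ A let p_α : B → M_α be a continuous map into a compact metrizable space M_α such that: (i) whenever α ≤ β in A there is a continuous map q : M_β → M_α with p_α = q ∘ p_β; and (ii) for every cozero subset G of B there exists α ∈ A such that G = p_α⁻¹(p_α(G)). Then there exists β ∈ A such that the restriction p_β|X : X → p_β(X) is a homeomorphism onto its image; consequently the closure of p_β(X) in M_β is a metrizable compactification of X. -/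
/-!
A compact Hausdorff space is completely regular, so its cozero sets form a basis and their traces
form a basis of `X`. As `X` is separable metrizable, countably many cozero sets `G` already suffice.
Each of these is saturated for some `p α`; an upper bound `β` of the countably many indices makes
all of them saturated for `p β`, since saturation passes to finer maps. Finally `p β` is a closed
map, so a saturated open set is the preimage of an open set. Hence `X` carries the topology
induced by `p β`, and being `T₀` it is embedded.
-/

open Metric Topology TopologicalSpace

universe u v w

theorem isTopologicalBasis_isCozero (B : Type u) [TopologicalSpace B] [CompactSpace B] [T2Space B] :
    IsTopologicalBasis {G : Set B | IsCozero G} := by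
  refine isTopologicalBasis_of_isOpen_of_nhds ?_ ?_
  · rintro _ ⟨f, rfl⟩
    exact isOpen_compl_singleton.preimage f.continuous
  · intro b U hb hU
    obtain ⟨f, hf0, hf1, -⟩ := exists_continuous_zero_one_of_isClosed hU.isClosed_compl
      (isClosed_singleton (x := b)) (by simpa using hb)
    refine ⟨f ⁻¹' {0}ᶜ, ⟨f, rfl⟩, ?_, ?_⟩
    · simp [hf1 (Set.mem_singleton b)]
    · intro y hy
      by_contra hyU
      exact hy (hf0 hyU)

/-- An open set saturated for a closed map is the preimage of the open set `(g '' Gᶜ)ᶜ`. -/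
theorem exists_isOpen_preimage_eq_of_saturated {B : Type u} {Y : Type v} [TopologicalSpace B]
    [TopologicalSpace Y] {g : B → Y} (hg : IsClosedMap g) {G : Set B} (hG : IsOpen G)
    (hsat : ∀ a b, g a = g b → a ∈ G → b ∈ G) : ∃ V : Set Y, IsOpen V ∧ g ⁻¹' V = G := by
  refine ⟨(g '' Gᶜ)ᶜ, (hg _ hG.isClosed_compl).isOpen_compl, ?_⟩
  ext b
  constructor
  · intro h
    by_contra hb
    exact h ⟨b, hb, rfl⟩
  · rintro hb ⟨a, ha, hab⟩
    exact ha (hsat b a hab.symm hb)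

/-- Let `B` be compact Hausdorff and `X ⊆ B` dense, separable and completely
metrizable. Given a directed family of maps to compact metrizable spaces, factorizing all
cozero sets of `B`, with countable subsets of the index set bounded above, some `p β`
restricts to a homeomorphism of `X` onto its image, and the closure of `p β '' X` is a
metrizable compactification of `X`. -/
theorem exists_index_restriction_embedding
    (B : Type) [TopologicalSpace B] [CompactSpace B] [T2Space B]
    (X : Set B) (hdense : Dense X)
    (hsep : SeparableSpace X) (hcm : IsCompletelyMetrizable X)
    (A : Type) [PartialOrder A] [IsDirected A (· ≤ ·)]
    (hcount : ∀ S : Set A, S.Countable → ∃ ub, ∀ a ∈ S, a ≤ ub)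
    (M : A → Type) [∀ α, TopologicalSpace (M α)] [∀ α, CompactSpace (M α)]
    [∀ α, MetrizableSpace (M α)]
    (p : ∀ α, C(B, M α))
    (hfact : ∀ α β : A, α ≤ β → ∃ q : C(M β, M α), ∀ b, p α b = q (p β b))
    (hcozero : ∀ G : Set B, IsCozero G → ∃ α, G = p α ⁻¹' (p α '' G)) :
    ∃ β : A, Topology.IsEmbedding (fun x : X => p β x) ∧
      Topology.IsEmbedding (fun x : X =>
        (⟨p β x, subset_closure (Set.mem_image_of_mem _ x.2)⟩ : closure (p β '' X))) ∧
      DenseRange (fun x : X =>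
        (⟨p β x, subset_closure (Set.mem_image_of_mem _ x.2)⟩ : closure (p β '' X))) := by
  have : SecondCountableTopology X := by
    obtain ⟨m, hm, -⟩ := hcm
    let _ : MetricSpace X := m.replaceTopology hm.symm
    exact UniformSpace.secondCountable_of_separable X
  obtain ⟨s, hst, hs, hsb⟩ :=
    ((isTopologicalBasis_isCozero B).isInducing
      (IsInducing.subtypeVal (t := X))).exists_countable
  have hG : ∀ u ∈ s, ∃ G : Set B, IsCozero G ∧ Subtype.val ⁻¹' G = u := fun u hu => hst hu
  choose! G hGc hGs using hG
  have : Nonempty A := (hcount ∅ Set.countable_empty).nonempty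
  have hα : ∀ u ∈ s, ∃ α, G u = p α ⁻¹' (p α '' G u) := fun u hu => hcozero _ (hGc u hu)
  choose! idx hidx using hα
  obtain ⟨β, hβ⟩ := hcount (idx '' s) (hs.image idx)
  have hind : IsInducing (fun x : X => p β x) := by
    refine ⟨le_antisymm (((p β).continuous.comp continuous_subtype_val).le_induced) ?_⟩
    rw [hsb.eq_generateFrom]
    refine le_generateFrom fun u hu => ?_
    obtain ⟨q, hq⟩ := hfact (idx u) β (hβ _ (Set.mem_image_of_mem _ hu))
    obtain ⟨V, hV, hVG⟩ := exists_isOpen_preimage_eq_of_saturated (p β).continuous.isClosedMap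
      ((isTopologicalBasis_isCozero B).isOpen (hGc u hu)) (fun a b hab ha => by
        rw [hidx u hu]
        exact ⟨a, ha, by rw [hq, hq, hab]⟩)
    refine isOpen_induced_iff.2 ⟨V, hV, ?_⟩
    rw [← hGs u hu, ← hVG]
    rfl
  have hemb : IsEmbedding (fun x : X => p β x) := hind.isEmbedding
  refine ⟨β, hemb, hemb.codRestrict _ _, ?_⟩
  -- Density may be tested after applying the inclusion of the closure into `M β`.
  intro y
  rw [closure_subtype, ← Set.range_comp]
  convert y.2 using 2
  ext z
  simp [Set.mem_image]
end

section
/- Let B be a compact Hausdorff space and X ⊆ B a subspace which is separable and metrizable in the subspace topology. Then for every open subset U of X there exists a cozero subset V of B with V ∩ X = U. -/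
/-!
Write `U` as the trace of an open set `W` of `B`. By complete regularity of `B`, each point of `U`
lies in the cozero set of a continuous `[0, 1]`-valued function vanishing off `W`. The space `X` is
second countable, so countably many of these cozero sets already cover `U` (Lindelöf), and their
union is again a cozero set: it is the cozero set of a weighted sum of the functions
(`isCozero_iUnion`).
-/

open Metric Topology TopologicalSpace

universe u v w

/-- A countable union of cozero sets of `[0, 1]`-valued functions is cozero. The common bound `1`
lets any summable positive weights make the weighted sum converge uniformly. -/
lemma isCozero_iUnion {B ι : Type*} [TopologicalSpace B] [Countable ι] (f : ι → C(B, ℝ))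
    (hf : ∀ i b, f i b ∈ Set.Icc (0 : ℝ) 1) : IsCozero (⋃ i, f i ⁻¹' {0}ᶜ) := by
  have := Encodable.ofCountable ι
  obtain ⟨w, hw, c, hc, -⟩ := posSumOfEncodable one_pos ι
  have hle : ∀ i b, ‖w i * f i b‖ ≤ w i := fun i b => by
    rw [Real.norm_of_nonneg (mul_nonneg (hw i).le (hf i b).1)]
    exact mul_le_of_le_one_right (hw i).le (hf i b).2
  have hcont : Continuous fun b => ∑' i, w i * f i b :=
    continuous_tsum (fun i => continuous_const.mul (f i).continuous) hc.summable hle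
  refine ⟨⟨_, hcont⟩, ?_⟩
  ext b
  have hs : Summable fun i => w i * f i b := hc.summable.of_norm_bounded (hle · b)
  have h0 : ∀ i, 0 ≤ w i * f i b := fun i => mul_nonneg (hw i).le (hf i b).1
  have key : ∑' i, w i * f i b = 0 ↔ ∀ i, f i b = 0 := by
    rw [← hs.hasSum_iff, hasSum_zero_iff_of_nonneg h0, funext_iff]
    simp [(hw _).ne']
  simp [key]

/-- If `B` is compact Hausdorff and `X ⊆ B` is separable metrizable in the
subspace topology, then every open subset of `X` is the trace on `X` of a cozero subset
of `B`. -/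
theorem exists_cozero_trace_of_isOpen
    (B : Type) [TopologicalSpace B] [CompactSpace B] [T2Space B]
    (X : Set B) [SeparableSpace X] [MetrizableSpace X]
    (U : Set X) (hU : IsOpen U) :
    ∃ V : Set B, IsCozero V ∧ Subtype.val ⁻¹' V = U := by
  let _ := metrizableSpaceMetric X
  have : SecondCountableTopology X := UniformSpace.secondCountable_of_separable X
  obtain ⟨W, hW, rfl⟩ := isOpen_induced_iff.mp hU
  have hex : ∀ x : (Subtype.val ⁻¹' W : Set X), ∃ f : C(B, ℝ),
      f x.1.1 ≠ 0 ∧ (∀ b ∉ W, f b = 0) ∧ ∀ b, f b ∈ Set.Icc (0 : ℝ) 1 := by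
    intro x
    obtain ⟨f, h0, h1, h01⟩ := exists_continuous_zero_one_of_isClosed hW.isClosed_compl
      (isClosed_singleton (x := x.1.1)) (Set.disjoint_singleton_right.mpr fun h => h x.2)
    exact ⟨f, by simp [h1 (Set.mem_singleton _)], fun b hb => h0 hb, h01⟩
  choose f hfx hf0 hf01 using hex
  obtain ⟨T, hT, hTU⟩ := isOpen_iUnion_countable
    (fun x => (Subtype.val ⁻¹' (f x ⁻¹' {0}ᶜ) : Set X))
    (fun x => (isOpen_compl_singleton.preimage (f x).continuous).preimage continuous_subtype_val)
  have := hT.to_subtype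
  refine ⟨_, isCozero_iUnion (fun i : T => f i) (fun i => hf01 i), ?_⟩
  ext y
  constructor
  · intro hy
    obtain ⟨i, hi⟩ := Set.mem_iUnion.mp hy
    by_contra hyW
    exact hi (hf0 i y hyW)
  · intro hy
    have hmem : y ∈ ⋃ x, (Subtype.val ⁻¹' (f x ⁻¹' {0}ᶜ) : Set X) :=
      Set.mem_iUnion.mpr ⟨⟨y, hy⟩, hfx ⟨y, hy⟩⟩
    rw [← hTU] at hmem
    obtain ⟨i, hi, hyi⟩ := Set.mem_iUnion₂.mp hmem
    exact Set.mem_iUnion.mpr ⟨⟨i, hi⟩, hyi⟩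
end

section
/- Let B be a compact Hausdorff space, X ⊆ B a dense subspace, M a compact metrizable space, and p : B → M a continuous map such that X is saturated with respect to p (i.e. X = p⁻¹(p(X))) and the restriction p|X is injective. Then p|X : X → p(X) is a homeomorphism onto its image, and the closure of p(X) in M (which equals p(B)) is a metrizable compactification of X. -/
/-!
A continuous map from a compact space to a Hausdorff space is closed, and a closed map restricts to
a closed map from a saturated set onto its image. So `p|X`, being also injective, is an embedding:
for `W` open in `B` and `x ∈ X ∩ W`, the set `M \ p(B \ W)` is open, it contains `p x` because
saturation and injectivity make `x` the only point of its fibre, and its preimage lies in `W`.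
The equality `closure p(X) = p(B)` follows from density of `X` and compactness of `p(B)`.
-/

open Metric Topology TopologicalSpace

universe u v w

/-- If `B` is compact Hausdorff, `X ⊆ B` dense, `M` compact metrizable,
and `p : B → M` is continuous with `X` saturated and `p` injective on `X`, then `p|X` is an
embedding and the closure of `p(X)` (which is all of `p(B)`) is a metrizable
compactification of `X`. -/
theorem saturated_injective_restriction_is_compactification
    (B : Type) [TopologicalSpace B] [CompactSpace B] [T2Space B]
    (X : Set B) (hdense : Dense X)
    (M : Type) [TopologicalSpace M] [CompactSpace M] [MetrizableSpace M]
    (p : C(B, M)) (hsat : X = p ⁻¹' (p '' X)) (hinj : Set.InjOn p X) :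
    Topology.IsEmbedding (fun x : X => p x) ∧
      closure (p '' X) = Set.range p ∧
      Topology.IsEmbedding (fun x : X =>
        (⟨p x, subset_closure (Set.mem_image_of_mem _ x.2)⟩ : closure (p '' X))) ∧
      DenseRange (fun x : X =>
        (⟨p x, subset_closure (Set.mem_image_of_mem _ x.2)⟩ : closure (p '' X))) := by
  have hemb : Topology.IsEmbedding (fun x : X => p x) := by
    refine ⟨Topology.isInducing_iff_nhds.2 fun x => le_antisymm ?_ ?_, ?_⟩
    · exact (p.continuous.comp continuous_subtype_val).continuousAt.le_comap
    · intro U hU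
      obtain ⟨V, hVU, hVo, hxV⟩ := mem_nhds_iff.1 hU
      obtain ⟨W, hWo, rfl⟩ := isOpen_induced_iff.1 hVo
      -- The neighbourhood of `p x` is the complement of the compact set `p(B \ W)`.
      refine Filter.mem_comap.2 ⟨(p '' Wᶜ)ᶜ, ?_, ?_⟩
      · refine (hWo.isClosed_compl.isCompact.image p.continuous).isClosed.isOpen_compl.mem_nhds ?_
        rintro ⟨b, hbW, hb⟩
        -- Saturation puts `b` in `X`, where `p` is injective.
        have hbX : b ∈ X := by
          rw [hsat]
          exact ⟨x, x.2, hb.symm⟩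
        exact hbW (hinj hbX x.2 hb ▸ hxV)
      · intro y hy
        exact hVU (by_contra fun hyW => hy ⟨y, hyW, rfl⟩)
    · intro x y hxy
      exact Subtype.ext (hinj x.2 y.2 hxy)
  refine ⟨hemb, ?_, hemb.codRestrict _ _, ?_⟩
  · apply Set.Subset.antisymm
    · exact closure_minimal (Set.image_subset_range _ _) (isCompact_range p.continuous).isClosed
    · rw [← Set.image_univ, ← hdense.closure_eq]
      exact image_closure_subset_closure_image p.continuous
  · rintro ⟨y, hy⟩
    rw [closure_subtype, ← Set.range_comp]
    convert hy using 2
    ext z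
    simp
end
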